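/- arXiv:2206.10217 — 2 statements merged into one kernel-verified Lean document; each statement's English description precedes it below -/
import Mathlib

section
/- Suppose z > 0 is the unique solution of 1/ξ'(1) = ((1+z)/z²) log(1+z) − 1/z, that ξ'(1) > ξ''(0)(1+z), and that s ↦ s/ξ'(s) is convex on (0,1). Then the minimizer γ⋆ over 𝒰 of the zero-temperature spherical Parisi functional P is one-step replica symmetry breaking: there exist constants c₀, c₁ ≥ 0 and t₀ ∈ [0,1) such that γ⋆(t) = c₀ + c₁ · 1{t ≥ t₀} for almost every t ∈ [0,1). -/
open MeasureTheory ProbabilityTheory Filter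
open scoped ENNReal NNReal

noncomputable section

/-- Euclidean dot product on `ℝ^N`. -/
def dotp {N : ℕ} (σ τ : Fin N → ℝ) : ℝ := ∑ i, σ i * τ i

/-- The sphere `S_N = {σ : ‖σ‖₂² = N}`. -/
def sphereSet (N : ℕ) : Set (Fin N → ℝ) := {σ | ∑ i, (σ i) ^ 2 = (N : ℝ)}

/-- The mixture `ξ(x) = Σ_{k=2}^P c_k² x^k`. -/
def xiFun (P : ℕ) (c : ℕ → ℝ) (x : ℝ) : ℝ := ∑ k ∈ Finset.Icc 2 P, (c k) ^ 2 * x ^ k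

/-- `ξ'`. -/
def xiD1 (P : ℕ) (c : ℕ → ℝ) (x : ℝ) : ℝ :=
  ∑ k ∈ Finset.Icc 2 P, (k : ℝ) * (c k) ^ 2 * x ^ (k - 1)

/-- `ξ''`. -/
def xiD2 (P : ℕ) (c : ℕ → ℝ) (x : ℝ) : ℝ :=
  ∑ k ∈ Finset.Icc 2 P, (k : ℝ) * ((k : ℝ) - 1) * (c k) ^ 2 * x ^ (k - 2)

/-- The mixed p-spin Hamiltonian built from couplings `g`. -/
def hamiltonian (N P : ℕ) (c : ℕ → ℝ) (g : (k : ℕ) → (Fin k → Fin N) → ℝ)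
    (σ : Fin N → ℝ) : ℝ :=
  ∑ k ∈ Finset.Icc 2 P, c k * (N : ℝ) ^ (-(((k : ℝ) - 1) / 2)) *
    ∑ j : Fin k → Fin N, g k j * ∏ i, σ (j i)

/-- Index set for the entries of all the coupling tensors. -/
abbrev GIdx (N P : ℕ) : Type := Σ k : {k : ℕ // k ∈ Finset.Icc 2 P}, (Fin (k : ℕ) → Fin N)

/-- Flatten the couplings into a single Gaussian vector. -/
def flatten (N P : ℕ) (g : (k : ℕ) → (Fin k → Fin N) → ℝ) : GIdx N P → ℝ :=
  fun i => g i.1 i.2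

/-- The couplings `(G^{(k)})_{2 ≤ k ≤ P}` are i.i.d. standard Gaussians. -/
def StdGaussianCouplings {Ω : Type*} [MeasureSpace Ω] (N P : ℕ)
    (G : Ω → (k : ℕ) → (Fin k → Fin N) → ℝ) : Prop :=
  Measure.map (fun ω => flatten N P (G ω)) ℙ = Measure.pi fun _ : GIdx N P => gaussianReal 0 1

/-- The maximum of the Hamiltonian over the sphere. -/
def maxH (N P : ℕ) (c : ℕ → ℝ) (g : (k : ℕ) → (Fin k → Fin N) → ℝ) : ℝ :=
  ⨆ σ : sphereSet N, hamiltonian N P c g σ.1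


/-- Euclidean gradient of the Hamiltonian. -/
def gradH (N P : ℕ) (c : ℕ → ℝ) (g : (k : ℕ) → (Fin k → Fin N) → ℝ)
    (σ : Fin N → ℝ) : Fin N → ℝ :=
  fun i => fderiv ℝ (hamiltonian N P c g) σ (Pi.single i 1)

/-- Euclidean Hessian of the Hamiltonian, as a bilinear form. -/
def hessH (N P : ℕ) (c : ℕ → ℝ) (g : (k : ℕ) → (Fin k → Fin N) → ℝ)
    (σ v w : Fin N → ℝ) : ℝ :=
  fderiv ℝ (fun τ => fderiv ℝ (hamiltonian N P c g) τ w) σ v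

/-- `σ` is a spherical critical point: `∇H(σ) = (⟨∇H(σ),σ⟩/N) σ`. -/
def IsCritPt (N P : ℕ) (c : ℕ → ℝ) (g : (k : ℕ) → (Fin k → Fin N) → ℝ)
    (σ : Fin N → ℝ) : Prop :=
  σ ∈ sphereSet N ∧ gradH N P c g σ = (dotp (gradH N P c g σ) σ / N) • σ

/-- Cardinality of a set, valued in `ℝ≥0∞`. -/
def ecount {α : Type*} (s : Set α) : ℝ≥0∞ := ∑' _ : s, 1

/-- Spherical critical points with energy at least `Nη`. -/
def crtSet (N P : ℕ) (c : ℕ → ℝ) (g : (k : ℕ) → (Fin k → Fin N) → ℝ)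
    (η : ℝ) : Set (Fin N → ℝ) :=
  {σ | IsCritPt N P c g σ ∧ (N : ℝ) * η ≤ hamiltonian N P c g σ}

/-- Index (number of negative eigenvalues) of the spherical Hessian quadratic form at `σ`:
maximal dimension of a subspace of the tangent space on which the form is negative definite. -/
def critIndex (N P : ℕ) (c : ℕ → ℝ) (g : (k : ℕ) → (Fin k → Fin N) → ℝ)
    (σ : Fin N → ℝ) : ℕ :=
  sSup {d : ℕ | ∃ W : Submodule ℝ (Fin N → ℝ), Module.finrank ℝ W = d ∧
    (∀ v ∈ W, dotp v σ = 0) ∧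
    ∀ v ∈ W, v ≠ 0 →
      hessH N P c g σ v v - (dotp (gradH N P c g σ) σ / N) * ∑ i, (v i) ^ 2 < 0}

/-- Critical points of index `N-1-k` in the superlevel set. -/
def crtSetIdx (N P : ℕ) (c : ℕ → ℝ) (g : (k : ℕ) → (Fin k → Fin N) → ℝ)
    (η : ℝ) (k : ℕ) : Set (Fin N → ℝ) :=
  {σ | σ ∈ crtSet N P c g η ∧ critIndex N P c g σ = N - 1 - k}

/-- Coefficients of the pure p-spin model. -/
def pureC (p : ℕ) : ℕ → ℝ := fun k => if k = p then 1 else 0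

/-- The uniform probability measure on the sphere `S_N`. -/
def sphereUniform (N : ℕ) : Measure (Fin N → ℝ) :=
  Measure.map (fun g i => Real.sqrt N * g i / Real.sqrt (∑ j, (g j) ^ 2))
    (Measure.pi fun _ : Fin N => gaussianReal 0 1)

/-- The band around `m`. -/
def band (N : ℕ) (m : Fin N → ℝ) (δ : ℝ) : Set (Fin N → ℝ) :=
  {σ | σ ∈ sphereSet N ∧ |dotp (σ - m) m| < N * δ}

/-- `k`-tuples from the band with pairwise overlaps close to `⟨m,m⟩`. -/
def bandK (N k : ℕ) (m : Fin N → ℝ) (δ ε : ℝ) : Set (Fin k → Fin N → ℝ) :=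
  {σs | (∀ i, σs i ∈ band N m δ) ∧
    ∀ i j, i ≠ j → |dotp (σs i) (σs j) - dotp m m| < N * ε}

/-- `∫₀ᵗ γ(s) ds`, valued in `ℝ≥0∞`. -/
def gammaLInt (γ : ℝ → ℝ) (t : ℝ) : ℝ≥0∞ := ∫⁻ s in Set.Ioo 0 t, ENNReal.ofReal (γ s)

/-- The zero-temperature spherical Parisi functional (Crisanti–Sommers form), with the
convention `1/0 = +∞`. -/
def PFunE (P : ℕ) (c : ℕ → ℝ) (γ : ℝ → ℝ) : ℝ≥0∞ :=
  ⨅ L ∈ {L : ℝ | gammaLInt γ 1 ≤ ENNReal.ofReal L},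
    (∫⁻ t in Set.Ioo (0 : ℝ) 1,
      (ENNReal.ofReal (xiD2 P c t * (L - (gammaLInt γ t).toReal))
        + (ENNReal.ofReal (L - (gammaLInt γ t).toReal))⁻¹)) / 2

/-- The space `𝒰` of order parameters: non-decreasing, non-negative, integrable on `[0,1)`. -/
def calU : Set (ℝ → ℝ) :=
  {γ | (∀ t ∈ Set.Ico (0 : ℝ) 1, 0 ≤ γ t) ∧ MonotoneOn γ (Set.Ico 0 1) ∧
    IntegrableOn γ (Set.Ioo 0 1)}

/-- The support of `γ`: points of `[0,1]` near which `γ` is not constant. -/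
def suppGamma (γ : ℝ → ℝ) : Set ℝ :=
  {q | q ∈ Set.Icc (0 : ℝ) 1 ∧ ∀ ε > 0, ∃ s ∈ Set.Ico (0 : ℝ) 1, ∃ t ∈ Set.Ico (0 : ℝ) 1,
    |s - q| < ε ∧ |t - q| < ε ∧ γ s ≠ γ t}

/-- The superlevel set `L_N(η)`. -/
def levelSet (N P : ℕ) (c : ℕ → ℝ) (g : (k : ℕ) → (Fin k → Fin N) → ℝ)
    (η : ℝ) : Set (Fin N → ℝ) :=
  {σ | σ ∈ sphereSet N ∧ (N : ℝ) * η ≤ hamiltonian N P c g σ}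

/-- Threshold energy of the pure p-spin model. -/
def THRp (p : ℕ) : ℝ := 2 * Real.sqrt (((p : ℝ) - 1) / p)

/-- The function `J` of the pure p-spin complexity. -/
def Jp (p : ℕ) (η : ℝ) : ℝ :=
  η / (THRp p) ^ 2 * Real.sqrt (η ^ 2 - (THRp p) ^ 2)
    - Real.log (η + Real.sqrt (η ^ 2 - (THRp p) ^ 2)) + Real.log (THRp p)

/-- The annealed complexity of the pure p-spin spherical model. -/
def SigmaPure (p : ℕ) (η : ℝ) : ℝ :=
  if η ≤ 0 then Real.log ((p : ℝ) - 1) / 2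
  else if η ≤ THRp p then
    Real.log ((p : ℝ) - 1) / 2 - ((p : ℝ) - 2) / (4 * ((p : ℝ) - 1)) * η ^ 2
  else Real.log ((p : ℝ) - 1) / 2 - ((p : ℝ) - 2) / (4 * ((p : ℝ) - 1)) * η ^ 2 - Jp p η

/-- Couplings, unflattened from a vector indexed by `GIdx N P`. -/
def unflatten (N P : ℕ) (g : GIdx N P → ℝ) : (k : ℕ) → (Fin k → Fin N) → ℝ :=
  fun k j => if h : k ∈ Finset.Icc 2 P then g ⟨⟨k, h⟩, j⟩ else 0

/-- `ξ'''`. -/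
def xiD3 (P : ℕ) (c : ℕ → ℝ) (x : ℝ) : ℝ :=
  ∑ k ∈ Finset.Icc 2 P, (k : ℝ) * ((k : ℝ) - 1) * ((k : ℝ) - 2) * (c k) ^ 2 * x ^ (k - 3)

open Set Topology

/-- The profile `Γ(t) = L - ∫₀ᵗ γ`. -/
def profile (L : ℝ) (γ : ℝ → ℝ) (t : ℝ) : ℝ := L - ∫ x in (0 : ℝ)..t, γ x

/-- The primitive `s ↦ ∫₀ˢ Γ⁻²`. -/
def invSqPrimitive (L : ℝ) (γ : ℝ → ℝ) (s : ℝ) : ℝ :=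
  ∫ t in (0 : ℝ)..s, 1 / (profile L γ t) ^ 2

section Profile

variable {γ : ℝ → ℝ} {L : ℝ}

lemma calU.intervalIntegrable (hγ : γ ∈ calU) {p q : ℝ} (hp : p ∈ Icc (0 : ℝ) 1)
    (hq : q ∈ Icc (0 : ℝ) 1) : IntervalIntegrable γ volume p q := by
  have h : IntervalIntegrable γ volume 0 1 :=
    (intervalIntegrable_iff_integrableOn_Ioo_of_le zero_le_one).2 hγ.2.2
  refine h.mono_set ?_
  rw [uIcc_of_le (zero_le_one' ℝ)]
  exact uIcc_subset_Icc hp hq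

lemma profile_sub (hγ : γ ∈ calU) {p q : ℝ} (hp : p ∈ Icc (0 : ℝ) 1)
    (hq : q ∈ Icc (0 : ℝ) 1) : profile L γ p - profile L γ q = ∫ x in p..q, γ x := by
  have h0 : (0 : ℝ) ∈ Icc (0 : ℝ) 1 := by simp
  have := intervalIntegral.integral_add_adjacent_intervals
    (calU.intervalIntegrable hγ h0 hp) (calU.intervalIntegrable hγ hp hq)
  simp only [profile]
  linarith

lemma calU.mul_le_integral (hγ : γ ∈ calU) {p q : ℝ} (hp : 0 ≤ p) (hpq : p ≤ q) (hq : q ≤ 1)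
    (hp1 : p < 1) : γ p * (q - p) ≤ ∫ x in p..q, γ x := by
  have h : ∫ x in p..q, γ p ≤ ∫ x in p..q, γ x := by
    refine intervalIntegral.integral_mono_on_of_le_Ioo hpq (by simp)
      (calU.intervalIntegrable hγ ⟨hp, by linarith⟩ ⟨by linarith, hq⟩) ?_
    intro x hx
    exact hγ.2.1 ⟨hp, hp1⟩ ⟨by linarith [hx.1], by linarith [hx.2]⟩ hx.1.le
  simpa [mul_comm] using h

lemma calU.integral_le_mul (hγ : γ ∈ calU) {p q : ℝ} (hp : 0 ≤ p) (hpq : p ≤ q) (hq : q < 1) :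
    ∫ x in p..q, γ x ≤ γ q * (q - p) := by
  have h : ∫ x in p..q, γ x ≤ ∫ x in p..q, γ q := by
    refine intervalIntegral.integral_mono_on_of_le_Ioo hpq
      (calU.intervalIntegrable hγ ⟨hp, by linarith⟩ ⟨by linarith, hq.le⟩) (by simp) ?_
    intro x hx
    exact hγ.2.1 ⟨by linarith [hx.1], by linarith [hx.2]⟩ ⟨by linarith, hq⟩ hx.2.le
  simpa [mul_comm] using h

lemma calU.integral_nonneg (hγ : γ ∈ calU) {p q : ℝ} (hp : 0 ≤ p) (hpq : p ≤ q) (hq : q ≤ 1) :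
    0 ≤ ∫ x in p..q, γ x := by
  rcases hp.trans hpq |>.trans hq |>.eq_or_lt with h | h
  · norm_num at h
  have h : ∫ x in p..q, (0 : ℝ) ≤ ∫ x in p..q, γ x := by
    refine intervalIntegral.integral_mono_on_of_le_Ioo hpq (by simp)
      (calU.intervalIntegrable hγ ⟨hp, by linarith⟩ ⟨by linarith, hq⟩) ?_
    intro x hx
    exact hγ.1 x ⟨by linarith [hx.1], by linarith [hx.2]⟩
  simpa using h

lemma profile_antitoneOn (hγ : γ ∈ calU) : AntitoneOn (profile L γ) (Icc 0 1) := by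
  intro p hp q hq hpq
  have := profile_sub (L := L) hγ hp hq
  have := calU.integral_nonneg hγ hp.1 hpq hq.2
  linarith

lemma profile_concaveOn (hγ : γ ∈ calU) : ConcaveOn ℝ (Ico 0 1) (profile L γ) := by
  refine concaveOn_of_slope_anti_adjacent (convex_Ico 0 1) ?_
  intro x y z hx hz hxy hyz
  have hy : y ∈ Icc (0 : ℝ) 1 := ⟨by linarith [hx.1], by linarith [hz.2]⟩
  have h1 := profile_sub (L := L) hγ ⟨hx.1, hx.2.le⟩ hy
  have h2 := profile_sub (L := L) hγ hy ⟨hz.1, hz.2.le⟩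
  have h3 := calU.mul_le_integral hγ hy.1 hyz.le hz.2.le (by linarith [hz.2])
  have h4 := calU.integral_le_mul hγ hx.1 hxy.le (by linarith [hz.2])
  trans (-γ y)
  · rw [div_le_iff₀ (by linarith)]; linarith
  · rw [le_div_iff₀ (by linarith)]; linarith

lemma profile_continuousOn (hγ : γ ∈ calU) : ContinuousOn (profile L γ) (Icc 0 1) := by
  refine continuousOn_const.sub ?_
  have h : IntegrableOn γ (uIcc 0 1) := by
    rw [uIcc_of_le (zero_le_one' ℝ), integrableOn_Icc_iff_integrableOn_Ioo]
    exact hγ.2.2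
  simpa [uIcc_of_le (zero_le_one' ℝ)] using intervalIntegral.continuousOn_primitive_interval h

/-- A profile that is affine on `[0, p]` has a constant order parameter there. -/
lemma calU.const_of_profile_affine (hγ : γ ∈ calU) {A B p : ℝ} (hp : p < 1)
    (h : ∀ t ∈ Ioo 0 p, profile L γ t = A - B * t) : ∀ t ∈ Ioo 0 p, γ t = B := by
  intro t ht
  apply le_antisymm
  · obtain ⟨q, hq⟩ := exists_between ht.2
    have h1 := calU.mul_le_integral hγ ht.1.le hq.1.le (by linarith [hq.2]) (by linarith [ht.2])
    rw [← profile_sub (L := L) hγ ⟨ht.1.le, by linarith [ht.2]⟩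
      ⟨by linarith [ht.1, hq.1], by linarith [hq.2]⟩, h t ht, h q ⟨by linarith [ht.1, hq.1], hq.2⟩]
      at h1
    have : 0 < q - t := by linarith [hq.1]
    nlinarith
  · obtain ⟨q, hq⟩ := exists_between ht.1
    have h1 := calU.integral_le_mul hγ hq.1.le hq.2.le (by linarith [ht.2])
    rw [← profile_sub (L := L) hγ ⟨hq.1.le, by linarith [ht.2, hq.2]⟩
      ⟨ht.1.le, by linarith [ht.2]⟩, h t ht, h q ⟨hq.1, by linarith [ht.2, hq.2]⟩] at h1
    have : 0 < t - q := by linarith [hq.2]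
    nlinarith

lemma calU.eqOn_Ioo_of_ae_eq (hγ : γ ∈ calU) {u v k : ℝ} (hu : 0 ≤ u) (hv : v ≤ 1)
    (h : ∀ᵐ s ∂volume.restrict (Ioo u v), γ s = k) : ∀ s ∈ Ioo u v, γ s = k := by
  have key : ∀ p q, u ≤ p → p < q → q ≤ v → ∃ s ∈ Ioo p q, γ s = k := by
    intro p q hp hpq hq
    have h' : ∀ᵐ s ∂volume.restrict (Ioo p q), γ s = k :=
      ae_mono (Measure.restrict_mono (Ioo_subset_Ioo hp hq) le_rfl) h
    have h'' := h'.and (ae_restrict_mem measurableSet_Ioo)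
    have : NeBot (ae (volume.restrict (Ioo p q))) := by
      rw [ae_neBot, Ne, Measure.restrict_eq_zero]
      simp [hpq]
    obtain ⟨s, hs⟩ := h''.exists
    exact ⟨s, hs.2, hs.1⟩
  intro s hs
  obtain ⟨a, ha, hak⟩ := key u s le_rfl hs.1 hs.2.le
  obtain ⟨b, hb, hbk⟩ := key s v hs.1.le hs.2 le_rfl
  have m : ∀ x ∈ Ioo u v, x ∈ Ico (0 : ℝ) 1 := fun x hx =>
    ⟨by linarith [hx.1], by linarith [hx.2]⟩
  have ha' := m a ⟨ha.1, ha.2.trans hs.2⟩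
  have hb' := m b ⟨hs.1.trans hb.1, hb.2⟩
  have h1 := hγ.2.1 ha' (m s hs) ha.2.le
  have h2 := hγ.2.1 (m s hs) hb' hb.1.le
  linarith

end Profile

section InvSq

variable {γ : ℝ → ℝ} {L : ℝ}

lemma invSq_continuousOn (hγ : γ ∈ calU) (hpos : ∀ t ∈ Ico (0 : ℝ) 1, 0 < profile L γ t) :
    ContinuousOn (fun t => 1 / (profile L γ t) ^ 2) (Ico 0 1) := by
  refine continuousOn_const.div (((profile_continuousOn hγ).mono Ico_subset_Icc_self).pow 2) ?_
  intro t ht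
  exact pow_ne_zero _ (hpos t ht).ne'

lemma invSq_intervalIntegrable (hγ : γ ∈ calU) (hpos : ∀ t ∈ Ico (0 : ℝ) 1, 0 < profile L γ t)
    {p q : ℝ} (hp : p ∈ Ico (0 : ℝ) 1) (hq : q ∈ Ico (0 : ℝ) 1) :
    IntervalIntegrable (fun t => 1 / (profile L γ t) ^ 2) volume p q := by
  refine ((invSq_continuousOn hγ hpos).mono ?_).intervalIntegrable
  exact ordConnected_Ico.uIcc_subset hp hq

lemma invSqPrimitive_sub (hγ : γ ∈ calU) (hpos : ∀ t ∈ Ico (0 : ℝ) 1, 0 < profile L γ t)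
    {p q : ℝ} (hp : p ∈ Ico (0 : ℝ) 1) (hq : q ∈ Ico (0 : ℝ) 1) :
    invSqPrimitive L γ q - invSqPrimitive L γ p = ∫ t in p..q, 1 / (profile L γ t) ^ 2 := by
  have h0 : (0 : ℝ) ∈ Ico (0 : ℝ) 1 := by simp
  have := intervalIntegral.integral_add_adjacent_intervals
    (invSq_intervalIntegrable hγ hpos h0 hp) (invSq_intervalIntegrable hγ hpos hp hq)
  simp only [invSqPrimitive]
  linarith

lemma invSqPrimitive_hasDerivAt (hγ : γ ∈ calU) (hpos : ∀ t ∈ Ico (0 : ℝ) 1, 0 < profile L γ t)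
    {s : ℝ} (hs : s ∈ Ioo (0 : ℝ) 1) :
    HasDerivAt (invSqPrimitive L γ) (1 / (profile L γ s) ^ 2) s := by
  have hc := (invSq_continuousOn hγ hpos).mono Ioo_subset_Ico_self
  exact intervalIntegral.integral_hasDerivAt_right
    (invSq_intervalIntegrable hγ hpos (by simp) ⟨hs.1.le, hs.2⟩)
    (hc.stronglyMeasurableAtFilter isOpen_Ioo s hs) (hc.continuousAt (isOpen_Ioo.mem_nhds hs))

lemma invSqPrimitive_pos (hγ : γ ∈ calU) (hpos : ∀ t ∈ Ico (0 : ℝ) 1, 0 < profile L γ t)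
    {s : ℝ} (hs : s ∈ Ioo (0 : ℝ) 1) : 0 < invSqPrimitive L γ s := by
  refine intervalIntegral.intervalIntegral_pos_of_pos_on
    (invSq_intervalIntegrable hγ hpos (by simp) ⟨hs.1.le, hs.2⟩) ?_ hs.1
  intro x hx
  have := hpos x ⟨hx.1.le, hx.2.trans hs.2⟩
  positivity

lemma invSqPrimitive_le (hγ : γ ∈ calU) (hpos : ∀ t ∈ Ico (0 : ℝ) 1, 0 < profile L γ t)
    {s : ℝ} (hs : s ∈ Ioo (0 : ℝ) 1) : invSqPrimitive L γ s ≤ s / (profile L γ s) ^ 2 := by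
  have h : invSqPrimitive L γ s ≤ ∫ t in (0 : ℝ)..s, 1 / (profile L γ s) ^ 2 := by
    refine intervalIntegral.integral_mono_on_of_le_Ioo hs.1.le
      (invSq_intervalIntegrable hγ hpos (by simp) ⟨hs.1.le, hs.2⟩) (by simp) ?_
    intro x hx
    have h1 := hpos s ⟨hs.1.le, hs.2⟩
    have h2 := profile_antitoneOn (L := L) hγ ⟨hx.1.le, by linarith [hx.2, hs.2]⟩
      ⟨hs.1.le, hs.2.le⟩ hx.2.le
    gcongr
  simpa [div_eq_mul_inv] using h

lemma integral_inv_sq_affine {A B p q : ℝ} (hA : 0 < A) (hpq : p ≤ q) (hB : 0 ≤ B)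
    (hq : 0 < A - B * q) :
    ∫ t in p..q, 1 / (A - B * t) ^ 2 = q / (A * (A - B * q)) - p / (A * (A - B * p)) := by
  have hpos : ∀ t ∈ uIcc p q, 0 < A - B * t := by
    intro t ht
    rw [uIcc_of_le hpq] at ht
    nlinarith [ht.1, ht.2]
  refine intervalIntegral.integral_eq_sub_of_hasDerivAt (f := fun t => t / (A * (A - B * t))) ?_ ?_
  · intro t ht
    have h := (hpos t ht).ne'
    have h1 : HasDerivAt (fun t => A * (A - B * t)) (A * (-(B * 1))) t :=
      (((hasDerivAt_id t).const_mul B).const_sub A).const_mul A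
    have h2 := (hasDerivAt_id t).div h1 (by positivity)
    refine h2.congr_deriv ?_
    simp only [id]
    field_simp
    ring
  · refine ContinuousOn.intervalIntegrable (continuousOn_const.div (by fun_prop) ?_)
    intro t ht
    exact pow_ne_zero _ (hpos t ht).ne'

/-- Comparison of the derivatives at `p < q` of `s ↦ s / R s`, where `R` is the primitive of the
inverse square of a concave function with values `A - B p`, `A - B q` at `p`, `q`. -/
lemma deriv_ratio_le_of_affine {A B p q x R : ℝ} (hA : 0 < A) (hB : 0 ≤ B) (hp : 0 < p)
    (hpq : p < q) (hk : 0 < A - B * q) (hx : 0 ≤ x)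
    (hxp : p / (A * (A - B * p)) + x ≤ p / (A - B * p) ^ 2)
    (hR : 0 < R) (hRq : R ≤ q / (A * (A - B * q)) + x) :
    (R - q / (A - B * q) ^ 2) / R ^ 2 ≤
      (p / (A * (A - B * p)) + x - p / (A - B * p) ^ 2) / (p / (A * (A - B * p)) + x) ^ 2 ∧
    (0 < x → (R - q / (A - B * q) ^ 2) / R ^ 2 <
      (p / (A * (A - B * p)) + x - p / (A - B * p) ^ 2) / (p / (A * (A - B * p)) + x) ^ 2) := by
  have hq : 0 < q := hp.trans hpq
  set g := A - B * p with hg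
  set k := A - B * q with hk'
  have hkg : k ≤ g := by nlinarith
  have hg0 : 0 < g := hk.trans_le hkg
  set Y := q / (A * k) + x with hY
  have hY0 : 0 < Y := by positivity
  have hYle : Y ≤ q / k ^ 2 := by
    have e1 : q / k ^ 2 - q / (A * k) = B * q ^ 2 / (A * k ^ 2) := by
      field_simp; rw [hk']; ring
    have e2 : p / g ^ 2 - p / (A * g) = B * p ^ 2 / (A * g ^ 2) := by
      field_simp; rw [hg]; ring
    have e3 : B * p ^ 2 / (A * g ^ 2) ≤ B * q ^ 2 / (A * k ^ 2) := by gcongr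
    linarith
  have step : (R - q / k ^ 2) / R ^ 2 ≤ (Y - q / k ^ 2) / Y ^ 2 := by
    set C := q / k ^ 2 with hC
    rw [div_le_div_iff₀ (by positivity) (by positivity)]
    have h1 : 0 ≤ (Y - R) * (C * (Y + R) - R * Y) := by
      refine mul_nonneg (by linarith) ?_
      have : R * Y ≤ R * C := by gcongr
      have : 0 ≤ C * Y := by positivity
      nlinarith
    nlinarith
  have form : ∀ s l : ℝ, 0 < s → 0 < l → l = A - B * s →
      (s / (A * l) + x - s / l ^ 2) / (s / (A * l) + x) ^ 2 =
        x * (A * l / (s + x * (A * l))) ^ 2 - A * B * (s / (s + x * (A * l))) ^ 2 := by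
    intro s l hs hl hsl
    have : 0 < s + x * (A * l) := by positivity
    have hB' : B = (A - l) / s := by field_simp; linarith
    have e : s / (A * l) + x = (s + x * (A * l)) / (A * l) := by field_simp
    rw [e, hB']
    field_simp
    ring
  have m1 : p / (p + x * (A * g)) ≤ q / (q + x * (A * k)) := by
    rw [div_le_div_iff₀ (by positivity) (by positivity)]
    have : p * (x * (A * k)) ≤ q * (x * (A * g)) := by gcongr
    nlinarith
  have m2 : A * k / (q + x * (A * k)) < A * g / (p + x * (A * g)) := by
    rw [div_lt_div_iff₀ (by positivity) (by positivity)]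
    have : A * k * p < A * g * q := by
      calc A * k * p < A * k * q := by gcongr
        _ ≤ A * g * q := by gcongr
    nlinarith
  have m1' : A * B * (p / (p + x * (A * g))) ^ 2 ≤ A * B * (q / (q + x * (A * k))) ^ 2 := by
    gcongr
  have m2' : (A * k / (q + x * (A * k))) ^ 2 < (A * g / (p + x * (A * g))) ^ 2 := by
    gcongr
  rw [form p g hp hg0 hg]
  rw [hY, form q k hq hk hk'] at step
  refine ⟨?_, fun hx0 => ?_⟩
  · have := mul_le_mul_of_nonneg_left m2'.le hx
    linarith
  · have := mul_lt_mul_of_pos_left m2' hx0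
    linarith

/-- The derivative of `s ↦ s / ∫₀ˢ Γ⁻²` is non-increasing, and it is strictly decreasing past any
point before which the order parameter is not constant. -/
lemma deriv_ratio_antitone (hγ : γ ∈ calU) (hpos : ∀ t ∈ Ico (0 : ℝ) 1, 0 < profile L γ t)
    {p q : ℝ} (hp : 0 < p) (hpq : p < q) (hq : q < 1) :
    (invSqPrimitive L γ q - q / (profile L γ q) ^ 2) / (invSqPrimitive L γ q) ^ 2 ≤
      (invSqPrimitive L γ p - p / (profile L γ p) ^ 2) / (invSqPrimitive L γ p) ^ 2 ∧
    ((invSqPrimitive L γ q - q / (profile L γ q) ^ 2) / (invSqPrimitive L γ q) ^ 2 =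
      (invSqPrimitive L γ p - p / (profile L γ p) ^ 2) / (invSqPrimitive L γ p) ^ 2 →
      ∃ k, ∀ t ∈ Ioo 0 p, γ t = k) := by
  have hpI : p ∈ Ico (0 : ℝ) 1 := ⟨hp.le, hpq.trans hq⟩
  have hqI : q ∈ Ico (0 : ℝ) 1 := ⟨(hp.trans hpq).le, hq⟩
  have h0I : (0 : ℝ) ∈ Ico (0 : ℝ) 1 := by simp
  set Γ := profile L γ with hΓ
  obtain ⟨B, hB⟩ : ∃ B, B = (Γ p - Γ q) / (q - p) := ⟨_, rfl⟩
  obtain ⟨A, hA⟩ : ∃ A, A = Γ p + B * p := ⟨_, rfl⟩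
  have hqp : 0 < q - p := by linarith
  have hanti := profile_antitoneOn (L := L) hγ
  have hB0 : 0 ≤ B := by
    rw [hB]
    have := hanti ⟨hpI.1, hpI.2.le⟩ ⟨hqI.1, hqI.2.le⟩ hpq.le
    exact div_nonneg (by linarith) hqp.le
  have hTp : Γ p = A - B * p := by linarith
  have hBq : B * (q - p) = Γ p - Γ q := by rw [hB]; field_simp
  have hTq : Γ q = A - B * q := by linarith
  have hΓp := hpos p hpI
  have hΓq := hpos q hqI
  have hA0 : 0 < A := by nlinarith
  have hconc := profile_concaveOn (L := L) hγ
  have hleft : ∀ t ∈ Ico 0 p, Γ t ≤ A - B * t := by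
    intro t ht
    have h := hconc.slope_anti_adjacent (x := t) (y := p) (z := q) ⟨ht.1, ht.2.trans hpI.2⟩ hqI
      ht.2 hpq
    rw [le_div_iff₀ (by linarith [ht.2])] at h
    have e : (profile L γ q - profile L γ p) / (q - p) = -B := by
      rw [hB, ← hΓ]; ring
    rw [e] at h
    linarith
  have hmid : ∀ t ∈ Ioo p q, A - B * t ≤ Γ t := by
    intro t ht
    have h := hconc.slope_anti_adjacent (x := p) (y := t) (z := q) hpI hqI ht.1 ht.2
    rw [div_le_div_iff₀ (by linarith [ht.2]) (by linarith [ht.1])] at h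
    rw [← hΓ, hTp, hTq] at h
    have : 0 ≤ (Γ t - (A - B * t)) * (q - p) := by nlinarith
    have := nonneg_of_mul_nonneg_left this hqp
    linarith
  have haff : ∀ t ∈ Icc 0 q, 0 < A - B * t := by
    intro t ht
    nlinarith [ht.1, ht.2]
  have hci : ∀ u v, u ∈ Icc 0 q → v ∈ Icc 0 q →
      IntervalIntegrable (fun t => 1 / (A - B * t) ^ 2) volume u v := by
    intro u v hu hv
    refine ContinuousOn.intervalIntegrable (continuousOn_const.div (by fun_prop) ?_)
    intro t ht
    exact pow_ne_zero _ (haff t (uIcc_subset_Icc hu hv ht)).ne'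
  have hpq' : p ∈ Icc 0 q := ⟨hp.le, hpq.le⟩
  have h0q' : (0 : ℝ) ∈ Icc 0 q := ⟨le_rfl, hqI.1⟩
  have hqq' : q ∈ Icc 0 q := ⟨hqI.1, le_rfl⟩
  have int0p : ∫ t in (0 : ℝ)..p, 1 / (A - B * t) ^ 2 = p / (A * (A - B * p)) := by
    rw [integral_inv_sq_affine hA0 hp.le hB0 (haff p hpq')]; simp
  have intpq : ∫ t in p..q, 1 / (A - B * t) ^ 2 =
      q / (A * (A - B * q)) - p / (A * (A - B * p)) :=
    integral_inv_sq_affine hA0 hpq.le hB0 (haff q hqq')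
  have hpt : ∀ t ∈ Ioo 0 p, 1 / (A - B * t) ^ 2 ≤ 1 / Γ t ^ 2 := by
    intro t ht
    have h1 := hpos t ⟨ht.1.le, ht.2.trans hpI.2⟩
    have h2 := hleft t ⟨ht.1.le, ht.2⟩
    gcongr
  have hx : p / (A * (A - B * p)) ≤ invSqPrimitive L γ p := by
    rw [← int0p]
    exact intervalIntegral.integral_mono_on_of_le_Ioo hp.le (hci _ _ h0q' hpq')
      (invSq_intervalIntegrable hγ hpos h0I hpI) hpt
  have hy : invSqPrimitive L γ q - invSqPrimitive L γ p ≤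
      q / (A * (A - B * q)) - p / (A * (A - B * p)) := by
    rw [← intpq, invSqPrimitive_sub hγ hpos hpI hqI]
    refine intervalIntegral.integral_mono_on_of_le_Ioo hpq.le
      (invSq_intervalIntegrable hγ hpos hpI hqI) (hci _ _ hpq' hqq') ?_
    intro t ht
    have h1 := haff t ⟨by linarith [ht.1], ht.2.le⟩
    have h2 := hmid t ht
    have h3 : 0 < profile L γ t := h1.trans_le h2
    rw [← hΓ]
    gcongr
  have hle := invSqPrimitive_le hγ hpos (s := p) ⟨hp, hpI.2⟩
  have hRq := invSqPrimitive_pos hγ hpos (s := q) ⟨hp.trans hpq, hq⟩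
  rw [← hΓ, hTp] at hle
  have main := deriv_ratio_le_of_affine (x := invSqPrimitive L γ p - p / (A * (A - B * p)))
    hA0 hB0 hp hpq (haff q hqq') (by linarith) (by linarith) hRq (by linarith)
  rw [add_sub_cancel] at main
  rw [hTp, hTq]
  refine ⟨main.1, fun heq => ⟨B, ?_⟩⟩
  have hx0 : invSqPrimitive L γ p = p / (A * (A - B * p)) := by
    by_contra hne
    exact absurd heq (main.2 (by
      rcases hx.lt_or_eq with h | h
      · linarith
      · exact absurd h.symm hne)).ne
  refine calU.const_of_profile_affine (L := L) (A := A) hγ hpI.2 ?_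
  by_contra! hcon
  obtain ⟨t, ht, hne⟩ := hcon
  have hlt : Γ t < A - B * t := lt_of_le_of_ne (hleft t ⟨ht.1.le, ht.2⟩) hne
  have : ∫ t in (0 : ℝ)..p, 1 / (A - B * t) ^ 2 < ∫ t in (0 : ℝ)..p, 1 / Γ t ^ 2 := by
    refine intervalIntegral.integral_lt_integral_of_continuousOn_of_le_of_exists_lt hp ?_ ?_ ?_ ?_
    · refine continuousOn_const.div (by fun_prop) ?_
      intro t ht
      exact pow_ne_zero _ (haff t ⟨ht.1, by linarith [ht.2]⟩).ne'
    · exact (invSq_continuousOn hγ hpos).mono (Icc_subset_Ico_right hpI.2)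
    · intro t ht
      rcases ht.2.lt_or_eq with h | h
      · exact hpt t ⟨ht.1, h⟩
      · rw [h, hTp]
    · refine ⟨t, ⟨ht.1.le, ht.2.le⟩, ?_⟩
      have h1 := hpos t ⟨ht.1.le, ht.2.trans hpI.2⟩
      gcongr
  rw [int0p, ← hx0] at this
  exact lt_irrefl _ this

end InvSq

section Mixture

variable {P : ℕ} {c : ℕ → ℝ}

lemma xiD1_hasDerivAt (x : ℝ) : HasDerivAt (xiD1 P c) (xiD2 P c x) x := by
  have : HasDerivAt (fun x => ∑ k ∈ Finset.Icc 2 P, (k : ℝ) * (c k) ^ 2 * x ^ (k - 1))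
      (∑ k ∈ Finset.Icc 2 P, (k : ℝ) * ((k : ℝ) - 1) * (c k) ^ 2 * x ^ (k - 2)) x := by
    refine HasDerivAt.fun_sum fun k hk => ?_
    have hk2 : 2 ≤ k := (Finset.mem_Icc.1 hk).1
    refine ((hasDerivAt_pow (k - 1) x).const_mul ((k : ℝ) * (c k) ^ 2)).congr_deriv ?_
    rw [Nat.cast_sub (by omega), Nat.sub_sub]
    push_cast
    ring
  exact this

lemma xiD2_continuous : Continuous (xiD2 P c) := by
  unfold xiD2
  fun_prop

lemma xiD1_zero : xiD1 P c 0 = 0 := by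
  refine Finset.sum_eq_zero fun k hk => ?_
  have hk2 : 2 ≤ k := (Finset.mem_Icc.1 hk).1
  rw [zero_pow (by omega), mul_zero]

lemma xiD2_nonneg {x : ℝ} (hx : 0 ≤ x) : 0 ≤ xiD2 P c x := by
  refine Finset.sum_nonneg fun k hk => ?_
  have hk2 : (2 : ℝ) ≤ k := by exact_mod_cast (Finset.mem_Icc.1 hk).1
  have : 0 ≤ (k : ℝ) - 1 := by linarith
  positivity

lemma xiD1_pos (hc : ∃ k ∈ Finset.Icc 2 P, c k ≠ 0) {x : ℝ} (hx : 0 < x) : 0 < xiD1 P c x := by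
  obtain ⟨k, hk, hck⟩ := hc
  refine Finset.sum_pos' (fun j _ => by positivity) ⟨k, hk, ?_⟩
  have hk2 : (2 : ℝ) ≤ k := by exact_mod_cast (Finset.mem_Icc.1 hk).1
  have : 0 < (k : ℝ) := by linarith
  positivity

lemma integral_xiD2 : ∫ t in (0 : ℝ)..1, xiD2 P c t = xiD1 P c 1 := by
  rw [intervalIntegral.integral_eq_sub_of_hasDerivAt (fun x _ => xiD1_hasDerivAt x)
    (xiD2_continuous.intervalIntegrable _ _), xiD1_zero, sub_zero]

end Mixture

section Energy

variable {P : ℕ} {c : ℕ → ℝ} {γ : ℝ → ℝ} {L : ℝ}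

/-- Integrand of the functional, as a function of the value `w` of the profile at time `t`. -/
def energyDensity (P : ℕ) (c : ℕ → ℝ) (t w : ℝ) : ℝ≥0∞ :=
  ENNReal.ofReal (xiD2 P c t * w) + (ENNReal.ofReal w)⁻¹

/-- Twice the functional at fixed `L`. -/
def energy (P : ℕ) (c : ℕ → ℝ) (L : ℝ) (γ : ℝ → ℝ) : ℝ≥0∞ :=
  ∫⁻ t in Ioo (0 : ℝ) 1, energyDensity P c t (profile L γ t)

lemma gammaLInt_eq (hγ : γ ∈ calU) {t : ℝ} (ht : t ∈ Icc (0 : ℝ) 1) :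
    gammaLInt γ t = ENNReal.ofReal (∫ x in (0 : ℝ)..t, γ x) := by
  rw [intervalIntegral.integral_of_le ht.1, integral_Ioc_eq_integral_Ioo, gammaLInt,
    ofReal_integral_eq_lintegral_ofReal]
  · exact hγ.2.2.mono_set (Ioo_subset_Ioo_right ht.2)
  · filter_upwards [ae_restrict_mem measurableSet_Ioo] with x hx
    exact hγ.1 x ⟨hx.1.le, hx.2.trans_le ht.2⟩

lemma PFunE_eq (hγ : γ ∈ calU) : PFunE P c γ =
    ⨅ L ∈ {L : ℝ | ENNReal.ofReal (∫ x in (0 : ℝ)..1, γ x) ≤ ENNReal.ofReal L},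
      energy P c L γ / 2 := by
  unfold PFunE
  rw [gammaLInt_eq hγ (by simp)]
  refine iInf_congr fun L => iInf_congr fun _ => ?_
  congr 1
  refine setLIntegral_congr_fun measurableSet_Ioo fun t ht => ?_
  have ht' : t ∈ Icc (0 : ℝ) 1 := ⟨ht.1.le, ht.2.le⟩
  have : L - (gammaLInt γ t).toReal = profile L γ t := by
    rw [gammaLInt_eq hγ ht', ENNReal.toReal_ofReal (calU.integral_nonneg hγ le_rfl ht'.1 ht'.2)]
    rfl
  simp only [this, energyDensity]

lemma energy_eq_top (hγ : γ ∈ calU) {t : ℝ} (ht : t ∈ Ico (0 : ℝ) 1)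
    (h : profile L γ t ≤ 0) : energy P c L γ = ⊤ := by
  rw [eq_top_iff]
  calc (⊤ : ℝ≥0∞) = ∫⁻ _ in Ioo t 1, ⊤ := by
        rw [setLIntegral_const, ENNReal.top_mul]
        simp [ht.2]
    _ = ∫⁻ s in Ioo t 1, energyDensity P c s (profile L γ s) := by
        refine setLIntegral_congr_fun measurableSet_Ioo fun s hs => ?_
        have : profile L γ s ≤ 0 := (profile_antitoneOn hγ ⟨ht.1, ht.2.le⟩
          ⟨ht.1.trans hs.1.le, hs.2.le⟩ hs.1.le).trans h
        simp [energyDensity, ENNReal.ofReal_of_nonpos this]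
    _ ≤ energy P c L γ := lintegral_mono_set (Ioo_subset_Ioo_left ht.1)

lemma continuous_energyDensity (t : ℝ) : Continuous (energyDensity P c t) := by
  unfold energyDensity
  exact (ENNReal.continuous_ofReal.comp (by fun_prop)).add
    (ENNReal.continuous_ofReal.inv)

lemma aemeasurable_energyDensity (hγ : γ ∈ calU) :
    AEMeasurable (fun t => energyDensity P c t (profile L γ t)) (volume.restrict (Ioo 0 1)) := by
  have h : AEMeasurable (profile L γ) (volume.restrict (Ioo 0 1)) :=
    ((profile_continuousOn hγ).mono Ioo_subset_Icc_self).aemeasurable measurableSet_Ioo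
  exact ((xiD2_continuous.measurable.aemeasurable.mul h).ennreal_ofReal).add
    h.ennreal_ofReal.inv

lemma lowerSemicontinuous_energy (hγ : γ ∈ calU) :
    LowerSemicontinuous (fun L => energy P c L γ) := by
  intro L
  refine lowerSemicontinuousAt_iff_le_liminf.2 ?_
  calc energy P c L γ
      = ∫⁻ t in Ioo (0 : ℝ) 1, liminf (fun M => energyDensity P c t (profile M γ t)) (𝓝 L) := by
        refine lintegral_congr fun t => ?_
        have : Tendsto (fun M => energyDensity P c t (profile M γ t)) (𝓝 L)
            (𝓝 (energyDensity P c t (profile L γ t))) := by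
          refine ((continuous_energyDensity t).comp ?_).tendsto L
          unfold profile
          fun_prop
        exact this.liminf_eq.symm
    _ ≤ _ := lintegral_liminf_le' fun M => aemeasurable_energyDensity hγ

lemma le_energy (hγ : γ ∈ calU) (hL : ∫ x in (0 : ℝ)..1, γ x ≤ L) :
    ENNReal.ofReal (xiD1 P c 1 * (L - ∫ x in (0 : ℝ)..1, γ x)) ≤ energy P c L γ := by
  set I := ∫ x in (0 : ℝ)..1, γ x with hI
  have e : xiD1 P c 1 * (L - I) = ∫ t in Ioo (0 : ℝ) 1, xiD2 P c t * (L - I) := by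
    rw [← integral_Ioc_eq_integral_Ioo, ← intervalIntegral.integral_of_le zero_le_one,
      intervalIntegral.integral_mul_const, integral_xiD2]
  rw [e, ofReal_integral_eq_lintegral_ofReal]
  · refine setLIntegral_mono' measurableSet_Ioo fun t ht => le_add_right ?_
    have h1 : L - I ≤ profile L γ t :=
      profile_antitoneOn (L := L) hγ ⟨ht.1.le, ht.2.le⟩ (by simp) ht.2.le
    have := xiD2_nonneg (P := P) (c := c) ht.1.le
    gcongr
  · exact ((xiD2_continuous.mul continuous_const).integrableOn_Icc (a := 0) (b := 1)).mono_set
      Ioo_subset_Icc_self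
  · filter_upwards [ae_restrict_mem measurableSet_Ioo] with t ht
    exact mul_nonneg (xiD2_nonneg ht.1.le) (by linarith)

lemma exists_energy_le_PFunE (hc : ∃ k ∈ Finset.Icc 2 P, c k ≠ 0) (hγ : γ ∈ calU)
    (hfin : PFunE P c γ ≠ ⊤) :
    ∃ L, ∫ x in (0 : ℝ)..1, γ x ≤ L ∧ energy P c L γ / 2 ≤ PFunE P c γ := by
  set I := ∫ x in (0 : ℝ)..1, γ x with hI
  have hI0 : 0 ≤ I := calU.integral_nonneg hγ le_rfl zero_le_one le_rfl
  have hx := xiD1_pos hc one_pos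
  set C := PFunE P c γ with hC
  set M := I + (2 * (C + 1)).toReal / xiD1 P c 1 with hM
  have hIM : I ≤ M := le_add_of_nonneg_right (by positivity)
  obtain ⟨L, hL, hmin⟩ := LowerSemicontinuousOn.exists_isMinOn (nonempty_Icc.2 hIM) isCompact_Icc
    ((lowerSemicontinuous_energy (P := P) (c := c) hγ).lowerSemicontinuousOn (Icc I M))
  refine ⟨L, hL.1, ?_⟩
  refine ENNReal.le_of_forall_pos_le_add fun ε hε _ => ?_
  obtain ⟨δ, hδ0, hδ1, hδε⟩ : ∃ δ : ℝ≥0∞, 0 < δ ∧ δ ≤ 1 ∧ δ ≤ ε :=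
    ⟨min 1 ε, by simpa using hε, min_le_left _ _, min_le_right _ _⟩
  have hlt : C < C + δ := ENNReal.lt_add_right hfin hδ0.ne'
  nth_rewrite 1 [hC] at hlt
  rw [PFunE_eq hγ] at hlt
  simp only [iInf_lt_iff] at hlt
  obtain ⟨K, hK, hKlt⟩ := hlt
  have hKle : energy P c K γ ≤ 2 * (C + δ) := by
    have := ENNReal.div_le_iff (two_ne_zero) (by simp) |>.1 hKlt.le
    rwa [mul_comm] at this
  have hKtop : energy P c K γ ≠ ⊤ := by
    refine (hKle.trans_lt ?_).ne
    exact ENNReal.mul_lt_top (by simp)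
      (ENNReal.add_lt_top.2 ⟨hfin.lt_top, hδ1.trans_lt ENNReal.one_lt_top⟩)
  have hK0 : 0 < K := by
    by_contra! h
    refine hKtop (energy_eq_top hγ (t := 0) (by simp) ?_)
    simpa [profile] using h
  have hIK : I ≤ K := (ENNReal.ofReal_le_ofReal_iff hK0.le).1 hK
  have hKM : K ≤ M := by
    have h1 := (le_energy (P := P) (c := c) hγ hIK).trans (hKle.trans
      (mul_le_mul_right (add_le_add_right hδ1 C) 2))
    have h2 : 2 * (C + 1) ≠ ⊤ := by
      exact ENNReal.mul_ne_top (by simp) (by simp [hfin])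
    rw [ENNReal.ofReal_le_iff_le_toReal h2] at h1
    rw [hM, ← sub_le_iff_le_add', le_div_iff₀ hx, mul_comm]
    exact h1
  calc energy P c L γ / 2 ≤ energy P c K γ / 2 := by
        gcongr
        exact hmin ⟨hIK, hKM⟩
    _ ≤ C + δ := hKlt.le
    _ ≤ C + ε := by gcongr

lemma PFunE_zero_ne_top : PFunE P c 0 ≠ ⊤ := by
  have h0 : (0 : ℝ → ℝ) ∈ calU :=
    ⟨fun _ _ => le_rfl, fun _ _ _ _ _ => le_rfl, integrable_zero _ _ _⟩
  rw [PFunE_eq h0]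
  refine ((iInf₂_le (1 : ℝ) (by simp)).trans_lt ?_).ne
  refine ENNReal.div_lt_top ?_ two_ne_zero
  have e : energy P c 1 0 = ∫⁻ t in Ioo (0 : ℝ) 1, (ENNReal.ofReal (xiD2 P c t) + 1) := by
    simp [energy, energyDensity, profile]
  rw [e, lintegral_add_right _ measurable_const]
  refine ENNReal.add_ne_top.2 ⟨?_, by simp⟩
  refine Integrable.lintegral_lt_top ?_ |>.ne
  exact (xiD2_continuous.integrableOn_Icc (a := 0) (b := 1)).mono_set Ioo_subset_Icc_self

/-- A minimizer of the functional, together with an optimal `L`, minimizes the energy. -/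
lemma exists_energy_minimizer (hc : ∃ k ∈ Finset.Icc 2 P, c k ≠ 0) (hγ : γ ∈ calU)
    (hmin : PFunE P c γ = ⨅ γ ∈ calU, PFunE P c γ) :
    ∃ L, ∫ x in (0 : ℝ)..1, γ x ≤ L ∧ energy P c L γ ≠ ⊤ ∧
      ∀ β ∈ calU, ∀ M, ∫ x in (0 : ℝ)..1, β x ≤ M → energy P c L γ ≤ energy P c M β := by
  have hle : ∀ β ∈ calU, PFunE P c γ ≤ PFunE P c β := fun β hβ => hmin ▸ iInf₂_le β hβ
  have h0 : (0 : ℝ → ℝ) ∈ calU :=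
    ⟨fun _ _ => le_rfl, fun _ _ _ _ _ => le_rfl, integrable_zero _ _ _⟩
  have hfin : PFunE P c γ ≠ ⊤ := ((hle 0 h0).trans_lt PFunE_zero_ne_top.lt_top).ne
  obtain ⟨L, hL, hLe⟩ := exists_energy_le_PFunE hc hγ hfin
  refine ⟨L, hL, fun htop => ?_, fun β hβ M hM => ?_⟩
  · rw [htop, ENNReal.top_div_of_ne_top (by simp)] at hLe
    exact hfin (top_le_iff.1 hLe)
  · have h1 : PFunE P c β ≤ energy P c M β / 2 := by
      rw [PFunE_eq hβ]
      exact iInf₂_le M (ENNReal.ofReal_le_ofReal hM)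
    have h2 := (hLe.trans (hle β hβ)).trans h1
    have h3 : energy P c L γ / 2 * 2 ≤ energy P c M β / 2 * 2 := by gcongr
    rwa [ENNReal.div_mul_cancel (by simp) (by simp), ENNReal.div_mul_cancel (by simp) (by simp)]
      at h3

end Energy

section Variation

variable {P : ℕ} {c : ℕ → ℝ} {γ β : ℝ → ℝ} {L M : ℝ}

lemma lintegral_energyDensity {v : ℝ} (hv : 0 ≤ v) {W : ℝ → ℝ} (hW : ContinuousOn W (Icc 0 v))
    (hpos : ∀ t ∈ Icc 0 v, 0 < W t) :
    ∫⁻ t in Ioo 0 v, energyDensity P c t (W t) =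
      ENNReal.ofReal (∫ t in (0 : ℝ)..v, (xiD2 P c t * W t + 1 / W t)) := by
  have hc : ContinuousOn (fun t => xiD2 P c t * W t + 1 / W t) (Icc 0 v) :=
    (xiD2_continuous.continuousOn.mul hW).add
      (continuousOn_const.div hW fun t ht => (hpos t ht).ne')
  rw [intervalIntegral.integral_of_le hv, integral_Ioc_eq_integral_Ioo,
    ofReal_integral_eq_lintegral_ofReal]
  · refine setLIntegral_congr_fun measurableSet_Ioo fun t ht => ?_
    have h := hpos t ⟨ht.1.le, ht.2.le⟩
    have h2 := xiD2_nonneg (P := P) (c := c) ht.1.le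
    simp only [energyDensity]
    rw [ENNReal.ofReal_add (by positivity) (by positivity), one_div, ENNReal.ofReal_inv_of_pos h]
  · exact hc.integrableOn_Icc.mono_set Ioo_subset_Icc_self
  · filter_upwards [ae_restrict_mem measurableSet_Ioo] with t ht
    have h := hpos t ⟨ht.1.le, ht.2.le⟩
    have h2 := xiD2_nonneg (P := P) (c := c) ht.1.le
    simp only [Pi.zero_apply]
    positivity

lemma calU.convexComb (hγ : γ ∈ calU) (hβ : β ∈ calU) {ε : ℝ} (h0 : 0 ≤ ε) (h1 : ε ≤ 1) :
    (fun t => (1 - ε) * γ t + ε * β t) ∈ calU := by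
  have h1' : 0 ≤ 1 - ε := by linarith
  refine ⟨fun t ht => ?_, fun s hs t ht hst => ?_, ?_⟩
  · have := hγ.1 t ht
    have := hβ.1 t ht
    positivity
  · have := hγ.2.1 hs ht hst
    have := hβ.2.1 hs ht hst
    dsimp only
    gcongr
  · exact (hγ.2.2.const_mul _).add (hβ.2.2.const_mul _)

lemma integral_convexComb (hγ : γ ∈ calU) (hβ : β ∈ calU) (ε : ℝ) {t : ℝ}
    (ht : t ∈ Icc (0 : ℝ) 1) : ∫ x in (0 : ℝ)..t, ((1 - ε) * γ x + ε * β x) =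
      (1 - ε) * (∫ x in (0 : ℝ)..t, γ x) + ε * ∫ x in (0 : ℝ)..t, β x := by
  have h0 : (0 : ℝ) ∈ Icc (0 : ℝ) 1 := by simp
  rw [intervalIntegral.integral_add ((calU.intervalIntegrable hγ h0 ht).const_mul _)
    ((calU.intervalIntegrable hβ h0 ht).const_mul _), intervalIntegral.integral_const_mul,
    intervalIntegral.integral_const_mul]

lemma profile_convexComb (hγ : γ ∈ calU) (hβ : β ∈ calU) (ε : ℝ) {t : ℝ}
    (ht : t ∈ Icc (0 : ℝ) 1) :
    profile ((1 - ε) * L + ε * M) (fun t => (1 - ε) * γ t + ε * β t) t =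
      (1 - ε) * profile L γ t + ε * profile M β t := by
  simp only [profile]
  rw [integral_convexComb hγ hβ ε ht]
  ring

lemma profile_pos_of_energy_ne_top (hγ : γ ∈ calU) (hfin : energy P c L γ ≠ ⊤) :
    ∀ t ∈ Ico (0 : ℝ) 1, 0 < profile L γ t := by
  intro t ht
  by_contra! h
  exact hfin (energy_eq_top hγ ht h)

/-- Minimality along the segment towards a competitor with the same profile on `[v, 1]`. -/
lemma integral_le_of_energy_le (hγ : γ ∈ calU) (hfin : energy P c L γ ≠ ⊤) (hβ : β ∈ calU)
    {v : ℝ} (hv : v ∈ Ioo (0 : ℝ) 1) (heq : ∀ t ∈ Ico v 1, profile M β t = profile L γ t)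
    (hle : energy P c L γ ≤ energy P c M β) :
    ∫ t in (0 : ℝ)..v, (xiD2 P c t * profile L γ t + 1 / profile L γ t) ≤
      ∫ t in (0 : ℝ)..v, (xiD2 P c t * profile M β t + 1 / profile M β t) := by
  have hpos := profile_pos_of_energy_ne_top hγ hfin
  have hv1 : v ∈ Icc (0 : ℝ) 1 := ⟨hv.1.le, hv.2.le⟩
  have hsub : Icc 0 v ⊆ Icc (0 : ℝ) 1 := Icc_subset_Icc_right hv.2.le
  have hposγ : ∀ t ∈ Icc 0 v, 0 < profile L γ t := fun t ht => hpos t ⟨ht.1, ht.2.trans_lt hv.2⟩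
  have hposβ : ∀ t ∈ Icc 0 v, 0 < profile M β t := fun t ht => by
    refine lt_of_lt_of_le ?_ (profile_antitoneOn (L := M) hβ (hsub ht) hv1 ht.2)
    rw [heq v ⟨le_rfl, hv.2⟩]
    exact hposγ v ⟨hv.1.le, le_rfl⟩
  have split : ∀ N α, energy P c N α = (∫⁻ t in Ioo 0 v, energyDensity P c t (profile N α t)) +
      ∫⁻ t in Ico v 1, energyDensity P c t (profile N α t) := by
    intro N α
    rw [energy, ← Ioo_union_Ico_eq_Ioo hv.1 hv.2.le, lintegral_union measurableSet_Ico]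
    rw [Set.disjoint_left]
    exact fun x hx hx' => absurd hx.2 (not_lt.2 hx'.1)
  have htail : ∫⁻ t in Ico v 1, energyDensity P c t (profile M β t) =
      ∫⁻ t in Ico v 1, energyDensity P c t (profile L γ t) :=
    setLIntegral_congr_fun measurableSet_Ico fun t ht => by
      rw [heq t ht]
  have htop : ∫⁻ t in Ico v 1, energyDensity P c t (profile L γ t) ≠ ⊤ := by
    refine ne_top_of_le_ne_top hfin ?_
    rw [split]
    exact le_add_left le_rfl
  rw [split L γ, split M β, htail, ENNReal.add_le_add_iff_right htop,
    lintegral_energyDensity hv.1.le ((profile_continuousOn hγ).mono hsub) hposγ,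
    lintegral_energyDensity hv.1.le ((profile_continuousOn hβ).mono hsub) hposβ,
    ENNReal.ofReal_le_ofReal_iff] at hle
  · exact hle
  · refine intervalIntegral.integral_nonneg hv.1.le fun t ht => ?_
    have h := hposβ t ht
    have h2 := xiD2_nonneg (P := P) (c := c) ht.1
    positivity

/-- Non-negativity of the first variation, in terms of profiles. -/
lemma integral_profile_variation_nonneg (hγ : γ ∈ calU) (hL : ∫ x in (0 : ℝ)..1, γ x ≤ L)
    (hfin : energy P c L γ ≠ ⊤)
    (hmin : ∀ β ∈ calU, ∀ M, ∫ x in (0 : ℝ)..1, β x ≤ M → energy P c L γ ≤ energy P c M β)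
    (hβ : β ∈ calU) {v : ℝ} (hv : v ∈ Ioo (0 : ℝ) 1)
    (heq : ∀ t ∈ Icc v 1, profile M β t = profile L γ t) :
    0 ≤ ∫ t in (0 : ℝ)..v,
      (profile M β t - profile L γ t) * (xiD2 P c t - 1 / (profile L γ t) ^ 2) := by
  have hpos := profile_pos_of_energy_ne_top hγ hfin
  have hv1 : v ∈ Icc (0 : ℝ) 1 := ⟨hv.1.le, hv.2.le⟩
  have hsub : Icc 0 v ⊆ Icc (0 : ℝ) 1 := Icc_subset_Icc_right hv.2.le
  have hM : ∫ x in (0 : ℝ)..1, β x ≤ M := by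
    have := heq 1 ⟨hv.2.le, le_rfl⟩
    simp only [profile] at this
    linarith
  set m := profile L γ v with hm
  have hm0 : 0 < m := hpos v ⟨hv.1.le, hv.2⟩
  have hγm : ∀ t ∈ Icc 0 v, m ≤ profile L γ t := fun t ht =>
    profile_antitoneOn (L := L) hγ (hsub ht) hv1 ht.2
  have hβm : ∀ t ∈ Icc 0 v, m ≤ profile M β t := fun t ht => by
    rw [hm, ← heq v ⟨le_rfl, hv.2.le⟩]
    exact profile_antitoneOn (L := M) hβ (hsub ht) hv1 ht.2
  have hγc := (profile_continuousOn (L := L) hγ).mono hsub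
  have hβc := (profile_continuousOn (L := M) hβ).mono hsub
  obtain ⟨K, hK⟩ := isCompact_Icc.exists_bound_of_continuousOn (hβc.sub hγc)
  set X := ∫ t in (0 : ℝ)..v,
      (profile M β t - profile L γ t) * (xiD2 P c t - 1 / (profile L γ t) ^ 2) with hX
  have key : ∀ ε ∈ Ioc (0 : ℝ) 1, 0 ≤ X + ε * (v * (K ^ 2 / m ^ 3)) := by
    intro ε hε
    have h1 : 0 ≤ 1 - ε := by linarith [hε.2]
    have hα := calU.convexComb hγ hβ hε.1.le hε.2
    have hle := integral_le_of_energy_le (M := (1 - ε) * L + ε * M) hγ hfin hα hv ?_ ?_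
    rotate_left
    · intro t ht
      rw [profile_convexComb hγ hβ ε ⟨hv.1.le.trans ht.1, ht.2.le⟩, heq t ⟨ht.1, ht.2.le⟩]
      ring
    · refine hmin _ hα _ ?_
      rw [integral_convexComb hγ hβ ε (by simp)]
      have := hε.1
      gcongr
    have hγi : IntervalIntegrable (fun t => xiD2 P c t * profile L γ t + 1 / profile L γ t)
        volume 0 v := by
      refine ContinuousOn.intervalIntegrable ?_
      rw [uIcc_of_le hv.1.le]
      exact (xiD2_continuous.continuousOn.mul hγc).add
        (continuousOn_const.div hγc fun t ht => (hm0.trans_le (hγm t ht)).ne')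
    have hgi : IntervalIntegrable (fun t => (profile M β t - profile L γ t) *
        (xiD2 P c t - 1 / (profile L γ t) ^ 2)) volume 0 v := by
      refine ContinuousOn.intervalIntegrable ?_
      rw [uIcc_of_le hv.1.le]
      refine (hβc.sub hγc).mul (xiD2_continuous.continuousOn.sub
        (continuousOn_const.div (hγc.pow 2) fun t ht => ?_))
      exact pow_ne_zero _ (hm0.trans_le (hγm t ht)).ne'
    have hbound : ∫ t in (0 : ℝ)..v,
        (xiD2 P c t * profile ((1 - ε) * L + ε * M) (fun t => (1 - ε) * γ t + ε * β t) t +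
          1 / profile ((1 - ε) * L + ε * M) (fun t => (1 - ε) * γ t + ε * β t) t) ≤
        ∫ t in (0 : ℝ)..v, ((xiD2 P c t * profile L γ t + 1 / profile L γ t) +
          ε * ((profile M β t - profile L γ t) * (xiD2 P c t - 1 / (profile L γ t) ^ 2)) +
          ε ^ 2 * (K ^ 2 / m ^ 3)) := by
      refine intervalIntegral.integral_mono_on hv.1.le ?_
        ((hγi.add (hgi.const_mul ε)).add (by simp)) ?_
      · refine ContinuousOn.intervalIntegrable ?_
        rw [uIcc_of_le hv.1.le]
        have hαc := (profile_continuousOn (L := (1 - ε) * L + ε * M) hα).mono hsub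
        refine (xiD2_continuous.continuousOn.mul hαc).add
          (continuousOn_const.div hαc fun t ht => ?_)
        rw [profile_convexComb hγ hβ ε (hsub ht)]
        have h2 := hγm t ht
        have h3 := hβm t ht
        have := hε.1
        nlinarith
      · intro t ht
        rw [profile_convexComb hγ hβ ε (hsub ht)]
        have h2 := hγm t ht
        have h3 := hβm t ht
        have h4 := hK t ht
        rw [Real.norm_eq_abs] at h4
        set a := profile L γ t
        set b := profile M β t
        have hw : m ≤ (1 - ε) * a + ε * b := by nlinarith [hε.1]
        have ha : 0 < a := hm0.trans_le h2
        have hw0 : 0 < (1 - ε) * a + ε * b := hm0.trans_le hw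
        have e : 1 / ((1 - ε) * a + ε * b) = 1 / a - ε * ((b - a) * (1 / a ^ 2)) +
            ε ^ 2 * ((b - a) ^ 2 / (a ^ 2 * ((1 - ε) * a + ε * b))) := by
          field_simp
          ring
        have hq : (b - a) ^ 2 / (a ^ 2 * ((1 - ε) * a + ε * b)) ≤ K ^ 2 / m ^ 3 := by
          have : (b - a) ^ 2 ≤ K ^ 2 := by
            rw [← sq_abs]; gcongr; exact h4
          calc _ ≤ K ^ 2 / (m ^ 2 * m) := by gcongr
            _ = _ := by ring
        have := mul_le_mul_of_nonneg_left hq (sq_nonneg ε)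
        rw [e]
        nlinarith
    rw [intervalIntegral.integral_add (hγi.add (hgi.const_mul ε)) (by simp),
      intervalIntegral.integral_add hγi (hgi.const_mul ε), intervalIntegral.integral_const_mul,
      intervalIntegral.integral_const, smul_eq_mul, sub_zero, ← hX] at hbound
    have : 0 ≤ ε * (X + ε * (v * (K ^ 2 / m ^ 3))) := by nlinarith
    exact nonneg_of_mul_nonneg_right this hε.1
  have hlim : Tendsto (fun ε : ℝ => X + ε * (v * (K ^ 2 / m ^ 3))) (𝓝[>] 0) (𝓝 X) := by
    have : Tendsto (fun ε : ℝ => X + ε * (v * (K ^ 2 / m ^ 3))) (𝓝 0)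
        (𝓝 (X + 0 * (v * (K ^ 2 / m ^ 3)))) := Continuous.tendsto (by fun_prop) 0
    simpa using this.mono_left nhdsWithin_le_nhds
  refine ge_of_tendsto hlim ?_
  filter_upwards [Ioc_mem_nhdsGT (zero_lt_one' ℝ)] with ε hε using key ε hε

lemma profile_hasDerivAt (hγ : γ ∈ calU) {t : ℝ} (ht : t ∈ Ioo (0 : ℝ) 1)
    (hc : ContinuousWithinAt γ (Ico 0 1) t) : HasDerivAt (profile L γ) (-γ t) t := by
  have h := intervalIntegral.integral_hasDerivAt_right
    (calU.intervalIntegrable hγ (p := 0) (by simp) ⟨ht.1.le, ht.2.le⟩)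
    ⟨Ioo 0 1, isOpen_Ioo.mem_nhds ht, hγ.2.2.aestronglyMeasurable⟩
    (hc.continuousAt (Ico_mem_nhds ht.1 ht.2))
  exact h.const_sub L

/-- Difference of the primitives of `ξ''` and of `Γ⁻²`. -/
def gapFun (P : ℕ) (c : ℕ → ℝ) (L : ℝ) (γ : ℝ → ℝ) (s : ℝ) : ℝ :=
  xiD1 P c s - invSqPrimitive L γ s

lemma gapFun_hasDerivAt (hγ : γ ∈ calU) (hpos : ∀ t ∈ Ico (0 : ℝ) 1, 0 < profile L γ t)
    {s : ℝ} (hs : s ∈ Ioo (0 : ℝ) 1) :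
    HasDerivAt (gapFun P c L γ) (xiD2 P c s - 1 / (profile L γ s) ^ 2) s :=
  (xiD1_hasDerivAt s).sub (invSqPrimitive_hasDerivAt hγ hpos hs)

lemma gapFun_continuousOn (hγ : γ ∈ calU) (hpos : ∀ t ∈ Ico (0 : ℝ) 1, 0 < profile L γ t)
    {v : ℝ} (hv : v ∈ Ioo (0 : ℝ) 1) : ContinuousOn (gapFun P c L γ) (Icc 0 v) := by
  refine ContinuousOn.sub
    (continuous_iff_continuousAt.2 fun x => (xiD1_hasDerivAt x).continuousAt).continuousOn ?_
  have := intervalIntegral.continuousOn_primitive_interval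
    (f := fun t => 1 / (profile L γ t) ^ 2) (a := 0) (b := v) (μ := volume) ?_
  · rwa [uIcc_of_le hv.1.le] at this
  · rw [uIcc_of_le hv.1.le]
    exact ((invSq_continuousOn hγ hpos).mono (Icc_subset_Ico_right hv.2)).integrableOn_Icc

/-- Non-negativity of the first variation, in terms of order parameters. -/
lemma integral_variation_nonneg (hγ : γ ∈ calU) (hL : ∫ x in (0 : ℝ)..1, γ x ≤ L)
    (hfin : energy P c L γ ≠ ⊤)
    (hmin : ∀ β ∈ calU, ∀ M, ∫ x in (0 : ℝ)..1, β x ≤ M → energy P c L γ ≤ energy P c M β)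
    (hβ : β ∈ calU) {v : ℝ} (hv : v ∈ Ioo (0 : ℝ) 1) (heq : ∀ t ∈ Ioo v 1, β t = γ t) :
    0 ≤ ∫ t in (0 : ℝ)..v, (β t - γ t) * gapFun P c L γ t := by
  have hpos := profile_pos_of_energy_ne_top hγ hfin
  have hv1 : v ∈ Icc (0 : ℝ) 1 := ⟨hv.1.le, hv.2.le⟩
  have h0 : (0 : ℝ) ∈ Icc (0 : ℝ) 1 := by simp
  have hsub : Icc 0 v ⊆ Icc (0 : ℝ) 1 := Icc_subset_Icc_right hv.2.le
  set M := profile L γ v + ∫ x in (0 : ℝ)..v, β x with hM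
  have hMv : profile M β v = profile L γ v := by simp [profile, hM]
  have heq' : ∀ t ∈ Icc v 1, profile M β t = profile L γ t := by
    intro t ht
    have ht1 : t ∈ Icc (0 : ℝ) 1 := ⟨hv.1.le.trans ht.1, ht.2⟩
    have h1 := profile_sub (L := L) hγ hv1 ht1
    have h2 := profile_sub (L := M) hβ hv1 ht1
    have h3 : ∫ x in v..t, β x = ∫ x in v..t, γ x := by
      rw [intervalIntegral.integral_of_le ht.1, intervalIntegral.integral_of_le ht.1,
        integral_Ioc_eq_integral_Ioo, integral_Ioc_eq_integral_Ioo]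
      exact setIntegral_congr_fun measurableSet_Ioo fun x hx => heq x ⟨hx.1, hx.2.trans_le ht.2⟩
    linarith
  have hvar := integral_profile_variation_nonneg hγ hL hfin hmin hβ hv heq'
  have hγc := (profile_continuousOn (L := L) hγ).mono hsub
  have hβc := (profile_continuousOn (L := M) hβ).mono hsub
  have hGc := gapFun_continuousOn (P := P) (c := c) hγ hpos hv
  have hgi : IntervalIntegrable (fun t => (profile M β t - profile L γ t) *
      (xiD2 P c t - 1 / (profile L γ t) ^ 2)) volume 0 v := by
    refine ContinuousOn.intervalIntegrable ?_
    rw [uIcc_of_le hv.1.le]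
    exact (hβc.sub hγc).mul (xiD2_continuous.continuousOn.sub
      ((invSq_continuousOn hγ hpos).mono (Icc_subset_Ico_right hv.2)))
  have hηi : IntervalIntegrable (fun t => (β t - γ t) * gapFun P c L γ t) volume 0 v := by
    refine ((calU.intervalIntegrable hβ h0 hv1).sub
      (calU.intervalIntegrable hγ h0 hv1)).mul_continuousOn ?_
    rwa [uIcc_of_le hv.1.le]
  have hparts := MeasureTheory.integral_eq_of_hasDerivAt_off_countable_of_le
    (fun t => (profile M β t - profile L γ t) * gapFun P c L γ t)
    (fun t => (profile M β t - profile L γ t) * (xiD2 P c t - 1 / (profile L γ t) ^ 2) -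
      (β t - γ t) * gapFun P c L γ t) hv.1.le
    (hβ.2.1.countable_not_continuousWithinAt.union hγ.2.1.countable_not_continuousWithinAt)
    ((hβc.sub hγc).mul hGc) ?_ (hgi.sub hηi)
  · rw [intervalIntegral.integral_sub hgi hηi, hMv, sub_self, zero_mul] at hparts
    have hG0 : gapFun P c L γ 0 = 0 := by simp [gapFun, xiD1_zero, invSqPrimitive]
    rw [hG0] at hparts
    linarith
  · rintro t ⟨ht, htc⟩
    have ht1 : t ∈ Ioo (0 : ℝ) 1 := ⟨ht.1, ht.2.trans hv.2⟩
    simp only [mem_union, mem_ofPred_eq, not_or, not_and, not_not] at htc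
    have hd1 := profile_hasDerivAt (L := M) hβ ht1 (htc.1 ⟨ht1.1.le, ht1.2⟩)
    have hd2 := profile_hasDerivAt (L := L) hγ ht1 (htc.2 ⟨ht1.1.le, ht1.2⟩)
    refine ((hd1.sub hd2).mul (gapFun_hasDerivAt hγ hpos ht1)).congr_deriv ?_
    simp only [Pi.sub_apply]
    ring

end Variation

section Structure

variable {P : ℕ} {c : ℕ → ℝ} {L : ℝ} {γ : ℝ → ℝ}

/-- Flattening an order parameter to its value at `a` on an interval containing `a`. -/
lemma calU.piecewise_const (hγ : γ ∈ calU) {u a v : ℝ} (hu : 0 ≤ u) (hua : u ≤ a) (hav : a ≤ v)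
    (hv : v < 1) : (Ioc u v).piecewise (fun _ => γ a) γ ∈ calU := by
  classical
  have ha : a ∈ Ico (0 : ℝ) 1 := ⟨hu.trans hua, hav.trans_lt hv⟩
  refine ⟨fun t ht => ?_, fun s hs t ht hst => ?_, ?_⟩
  · by_cases h : t ∈ Ioc u v
    · rw [piecewise_eq_of_mem _ _ _ h]
      exact hγ.1 a ha
    · rw [piecewise_eq_of_notMem _ _ _ h]
      exact hγ.1 t ht
  · by_cases h : s ∈ Ioc u v <;> by_cases h' : t ∈ Ioc u v
    · rw [piecewise_eq_of_mem _ _ _ h, piecewise_eq_of_mem _ _ _ h']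
    · rw [piecewise_eq_of_mem _ _ _ h, piecewise_eq_of_notMem _ _ _ h']
      refine hγ.2.1 ha ht ?_
      by_contra! hta
      exact h' ⟨h.1.trans_le hst, hta.le.trans hav⟩
    · rw [piecewise_eq_of_notMem _ _ _ h, piecewise_eq_of_mem _ _ _ h']
      refine hγ.2.1 hs ha ?_
      by_contra! hsa
      exact h ⟨hua.trans_lt hsa, hst.trans h'.2⟩
    · rw [piecewise_eq_of_notMem _ _ _ h, piecewise_eq_of_notMem _ _ _ h']
      exact hγ.2.1 hs ht hst
  · exact Integrable.piecewise measurableSet_Ioc (integrable_const _).integrableOn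
      (Integrable.integrableOn hγ.2.2)

/-- If the gap changes sign from negative to positive at `a`, the minimizer equals `γ a` almost
everywhere the gap does not vanish. -/
lemma ae_eq_of_gapFun_sign (hγ : γ ∈ calU) (hL : ∫ x in (0 : ℝ)..1, γ x ≤ L)
    (hfin : energy P c L γ ≠ ⊤)
    (hmin : ∀ β ∈ calU, ∀ M, ∫ x in (0 : ℝ)..1, β x ≤ M → energy P c L γ ≤ energy P c M β)
    {u a v : ℝ} (hu : 0 ≤ u) (hua : u ≤ a) (hav : a ≤ v) (hv : v ∈ Ioo (0 : ℝ) 1)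
    (hneg : ∀ t ∈ Ioo u a, gapFun P c L γ t ≤ 0) (hnonneg : ∀ t ∈ Ioo a v, 0 ≤ gapFun P c L γ t) :
    ∀ᵐ t ∂volume.restrict (Ioo u v), gapFun P c L γ t ≠ 0 → γ t = γ a := by
  classical
  have hpos := profile_pos_of_energy_ne_top hγ hfin
  have ha : a ∈ Ico (0 : ℝ) 1 := ⟨hu.trans hua, hav.trans_lt hv.2⟩
  have h0 : (0 : ℝ) ∈ Icc (0 : ℝ) 1 := by simp
  have hv1 : v ∈ Icc (0 : ℝ) 1 := ⟨hv.1.le, hv.2.le⟩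
  set β := (Ioc u v).piecewise (fun _ => γ a) γ with hβdef
  have hβ : β ∈ calU := calU.piecewise_const hγ hu hua hav hv.2
  have hin : ∀ t ∈ Ioc u v, β t = γ a := fun t ht => piecewise_eq_of_mem _ _ _ ht
  have hout : ∀ t ∉ Ioc u v, β t = γ t := fun t ht => piecewise_eq_of_notMem _ _ _ ht
  have hvar := integral_variation_nonneg hγ hL hfin hmin hβ hv
    fun t ht => hout t fun h => absurd h.2 (not_le.2 ht.1)
  have hle : ∀ t ∈ Ioo 0 v, (β t - γ t) * gapFun P c L γ t ≤ 0 := by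
    intro t ht
    have ht1 : t ∈ Ico (0 : ℝ) 1 := ⟨ht.1.le, ht.2.trans hv.2⟩
    by_cases htu : t ∈ Ioc u v
    · rw [hin t htu]
      rcases lt_trichotomy t a with h | h | h
      · exact mul_nonpos_of_nonneg_of_nonpos (sub_nonneg.2 (hγ.2.1 ht1 ha h.le))
          (hneg t ⟨htu.1, h⟩)
      · simp [h]
      · exact mul_nonpos_of_nonpos_of_nonneg (sub_nonpos.2 (hγ.2.1 ha ht1 h.le))
          (hnonneg t ⟨h, ht.2⟩)
    · simp [hout t htu]
  have hfint : IntervalIntegrable (fun t => (β t - γ t) * gapFun P c L γ t) volume 0 v := by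
    refine ((calU.intervalIntegrable hβ h0 hv1).sub
      (calU.intervalIntegrable hγ h0 hv1)).mul_continuousOn ?_
    rw [uIcc_of_le hv.1.le]
    exact gapFun_continuousOn hγ hpos hv
  have hzero : ∀ᵐ t ∂volume.restrict (Ioo 0 v), (β t - γ t) * gapFun P c L γ t = 0 := by
    have hfint' := ((intervalIntegrable_iff_integrableOn_Ioo_of_le hv.1.le).1 hfint).neg
    rw [intervalIntegral.integral_of_le hv.1.le, integral_Ioc_eq_integral_Ioo] at hvar
    have hnn : 0 ≤ᵐ[volume.restrict (Ioo 0 v)]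
        -fun t => (β t - γ t) * gapFun P c L γ t := by
      filter_upwards [ae_restrict_mem measurableSet_Ioo] with t ht
      simpa using hle t ht
    have hz := (integral_eq_zero_iff_of_nonneg_ae hnn hfint').1 (le_antisymm
      (by simpa [integral_neg] using hvar) (integral_nonneg_of_ae hnn))
    filter_upwards [hz] with t ht
    simpa using ht
  filter_upwards [ae_restrict_of_ae_restrict_of_subset (Ioo_subset_Ioo_left hu) hzero,
    ae_restrict_mem measurableSet_Ioo] with t ht htu hG
  rw [hin t ⟨htu.1, htu.2.le⟩] at ht
  linarith [(mul_eq_zero.1 ht).resolve_right hG]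

/-- The gap, rescaled so as to become a concave function. -/
def ratioGap (P : ℕ) (c : ℕ → ℝ) (L : ℝ) (γ : ℝ → ℝ) (s : ℝ) : ℝ :=
  s / invSqPrimitive L γ s - s / xiD1 P c s

lemma ratioGap_eq (hc : ∃ k ∈ Finset.Icc 2 P, c k ≠ 0) (hγ : γ ∈ calU)
    (hpos : ∀ t ∈ Ico (0 : ℝ) 1, 0 < profile L γ t) {s : ℝ} (hs : s ∈ Ioo (0 : ℝ) 1) :
    ∃ κ > 0, ratioGap P c L γ s = κ * gapFun P c L γ s := by
  have h1 := xiD1_pos hc hs.1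
  have h2 := invSqPrimitive_pos hγ hpos hs
  refine ⟨s / (invSqPrimitive L γ s * xiD1 P c s), div_pos hs.1 (mul_pos h2 h1), ?_⟩
  rw [ratioGap, gapFun]
  field_simp

lemma ratioGap_hasDerivAt (hc : ∃ k ∈ Finset.Icc 2 P, c k ≠ 0) (hγ : γ ∈ calU)
    (hpos : ∀ t ∈ Ico (0 : ℝ) 1, 0 < profile L γ t) {s : ℝ} (hs : s ∈ Ioo (0 : ℝ) 1) :
    HasDerivAt (ratioGap P c L γ)
      ((invSqPrimitive L γ s - s / (profile L γ s) ^ 2) / (invSqPrimitive L γ s) ^ 2 -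
        deriv (fun s => s / xiD1 P c s) s) s := by
  have h1 := (xiD1_pos hc hs.1).ne'
  have h2 := (invSqPrimitive_pos hγ hpos hs).ne'
  have hd := (hasDerivAt_id s).div (invSqPrimitive_hasDerivAt hγ hpos hs) h2
  have hd' := ((hasDerivAt_id s).div (xiD1_hasDerivAt (P := P) (c := c) s) h1).differentiableAt
  refine (hd.sub hd'.hasDerivAt).congr_deriv ?_
  congr 1
  simp [div_eq_mul_inv]

lemma monotoneOn_deriv_div_xiD1 (hc : ∃ k ∈ Finset.Icc 2 P, c k ≠ 0)
    (hconv : ConvexOn ℝ (Ioo (0 : ℝ) 1) (fun s => s / xiD1 P c s)) :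
    MonotoneOn (deriv fun s => s / xiD1 P c s) (Ioo 0 1) :=
  hconv.monotoneOn_deriv fun s hs =>
    ((hasDerivAt_id s).div (xiD1_hasDerivAt s) (xiD1_pos hc hs.1).ne').differentiableAt

lemma ratioGap_concaveOn (hc : ∃ k ∈ Finset.Icc 2 P, c k ≠ 0)
    (hconv : ConvexOn ℝ (Ioo (0 : ℝ) 1) (fun s => s / xiD1 P c s)) (hγ : γ ∈ calU)
    (hpos : ∀ t ∈ Ico (0 : ℝ) 1, 0 < profile L γ t) :
    ConcaveOn ℝ (Ioo (0 : ℝ) 1) (ratioGap P c L γ) := by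
  have hd := fun s (hs : s ∈ Ioo (0 : ℝ) 1) => ratioGap_hasDerivAt hc hγ hpos hs
  refine AntitoneOn.concaveOn_of_deriv (convex_Ioo 0 1)
    (fun s hs => (hd s hs).continuousAt.continuousWithinAt) ?_ ?_ <;> rw [interior_Ioo]
  · exact fun s hs => (hd s hs).differentiableAt.differentiableWithinAt
  · intro p hp q hq hpq
    rw [(hd p hp).deriv, (hd q hq).deriv]
    rcases hpq.eq_or_lt with rfl | hlt
    · exact le_rfl
    · exact sub_le_sub (deriv_ratio_antitone hγ hpos hp.1 hlt hq.2).1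
        (monotoneOn_deriv_div_xiD1 hc hconv hp hq hpq)

/-- A concave function that is nonnegative at two points and vanishes in between vanishes at both
of them. -/
lemma ConcaveOn.eq_zero_of_eq_zero_between {s : Set ℝ} {f : ℝ → ℝ} (hf : ConcaveOn ℝ s f)
    {x y z : ℝ} (hx : x ∈ s) (hz : z ∈ s) (hxy : x < y) (hyz : y < z) (hfx : 0 ≤ f x)
    (hfz : 0 ≤ f z) (hfy : f y = 0) : f x = 0 ∧ f z = 0 := by
  have h := hf.slope_anti_adjacent hx hz hxy hyz
  rw [hfy, zero_sub, sub_zero, div_le_div_iff₀ (by linarith) (by linarith)] at h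
  have h1 : 0 ≤ f z * (y - x) := mul_nonneg hfz (by linarith)
  have h2 : 0 ≤ f x * (z - y) := mul_nonneg hfx (by linarith)
  constructor
  · exact (mul_eq_zero.1 (by linarith : f x * (z - y) = 0)).resolve_right (by linarith)
  · exact (mul_eq_zero.1 (by linarith : f z * (y - x) = 0)).resolve_right (by linarith)

/-- Below a point with nonnegative gap the minimizer is constant. -/
lemma eq_of_ratioGap_nonneg (hc : ∃ k ∈ Finset.Icc 2 P, c k ≠ 0)
    (hconv : ConvexOn ℝ (Ioo (0 : ℝ) 1) (fun s => s / xiD1 P c s)) (hγ : γ ∈ calU)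
    (hL : ∫ x in (0 : ℝ)..1, γ x ≤ L) (hfin : energy P c L γ ≠ ⊤)
    (hmin : ∀ β ∈ calU, ∀ M, ∫ x in (0 : ℝ)..1, β x ≤ M → energy P c L γ ≤ energy P c M β)
    {v : ℝ} (hv : v ∈ Ioo (0 : ℝ) 1) (hv0 : 0 ≤ ratioGap P c L γ v) :
    ∀ s ∈ Ioo 0 v, ∀ t ∈ Ioo 0 v, γ s = γ t := by
  have hpos := profile_pos_of_energy_ne_top hγ hfin
  have hconc := ratioGap_concaveOn hc hconv hγ hpos
  have hgap := fun s (hs : s ∈ Ioo (0 : ℝ) 1) => ratioGap_eq hc hγ hpos hs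
  have hIoo : ∀ t ∈ Ioo 0 v, t ∈ Ioo (0 : ℝ) 1 := fun t ht => ⟨ht.1, ht.2.trans hv.2⟩
  set S := {s | s ∈ Ioc 0 v ∧ 0 ≤ ratioGap P c L γ s} with hS
  have hbdd : BddBelow S := ⟨0, fun s hs => hs.1.1.le⟩
  have hvS : v ∈ S := ⟨⟨hv.1, le_rfl⟩, hv0⟩
  set a := sInf S with ha
  have ha0 : 0 ≤ a := le_csInf ⟨v, hvS⟩ fun s hs => hs.1.1.le
  have hav : a ≤ v := csInf_le hbdd hvS
  have hneg : ∀ t ∈ Ioo 0 a, ratioGap P c L γ t < 0 := by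
    intro t ht
    by_contra! h
    exact absurd (csInf_le hbdd (⟨⟨ht.1, (ht.2.trans_le hav).le⟩, h⟩ : t ∈ S)) (not_le.2 ht.2)
  have hnonneg : ∀ t ∈ Ioo a v, 0 ≤ ratioGap P c L γ t := by
    intro t ht
    obtain ⟨x, hx, hxt⟩ := exists_lt_of_csInf_lt ⟨v, hvS⟩ ht.1
    have := hconc.min_le_of_mem_Icc (⟨hx.1.1, hx.1.2.trans_lt hv.2⟩ : x ∈ Ioo (0 : ℝ) 1) hv
      ⟨hxt.le, ht.2.le⟩
    exact (le_min hx.2 hv0).trans this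
  have hae := ae_eq_of_gapFun_sign hγ hL hfin hmin le_rfl ha0 hav hv
    (fun t ht => by
      obtain ⟨κ, hκ, h⟩ := hgap t (hIoo t ⟨ht.1, ht.2.trans_le hav⟩)
      have := hneg t ht
      rw [h] at this
      exact le_of_not_gt fun h' => absurd this (not_lt.2 (mul_nonneg hκ.le h'.le)))
    (fun t ht => by
      obtain ⟨κ, hκ, h⟩ := hgap t (hIoo t ⟨ha0.trans_lt ht.1, ht.2⟩)
      have := hnonneg t ht
      rw [h] at this
      exact nonneg_of_mul_nonneg_right this hκ)
  by_cases hz : ∃ y ∈ Ioo a v, ratioGap P c L γ y = 0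
  · obtain ⟨y, hy, hy0⟩ := hz
    have hmem : ∀ t ∈ Ioo a v, t ∈ Ioo (0 : ℝ) 1 := fun t ht =>
      hIoo t ⟨ha0.trans_lt ht.1, ht.2⟩
    have hzero : ∀ t ∈ Ioo a v, ratioGap P c L γ t = 0 := by
      intro t ht
      rcases lt_trichotomy t y with h | rfl | h
      · exact (ConcaveOn.eq_zero_of_eq_zero_between hconc (hmem t ht) hv h hy.2
          (hnonneg t ht) hv0 hy0).1
      · exact hy0
      · obtain ⟨x, hx⟩ := exists_between hy.1
        have hx' : x ∈ Ioo a v := ⟨hx.1, hx.2.trans hy.2⟩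
        exact (ConcaveOn.eq_zero_of_eq_zero_between hconc (hmem x hx') (hmem t ht) hx.2 h
          (hnonneg x hx') (hnonneg t ht) hy0).2
    have hderiv : ∀ t ∈ Ioo a v,
        (invSqPrimitive L γ t - t / (profile L γ t) ^ 2) / (invSqPrimitive L γ t) ^ 2 =
          deriv (fun s => s / xiD1 P c s) t := by
      intro t ht
      have h0 : HasDerivAt (ratioGap P c L γ) 0 t :=
        (hasDerivAt_const t (0 : ℝ)).congr_of_eventuallyEq
          (eventually_of_mem (isOpen_Ioo.mem_nhds ht) hzero)
      exact sub_eq_zero.1 ((ratioGap_hasDerivAt hc hγ hpos (hmem t ht)).unique h0)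
    intro s hs t ht
    obtain ⟨p, hp⟩ := exists_between (max_lt hs.2 (max_lt ht.2 hy.2))
    obtain ⟨q, hq⟩ := exists_between hp.2
    have hps := (le_max_left _ _).trans_lt hp.1
    have hpty := (le_max_right _ _).trans_lt hp.1
    have hpt := (le_max_left _ _).trans_lt hpty
    have hpy := (le_max_right _ _).trans_lt hpty
    have hpm : p ∈ Ioo a v := ⟨hy.1.trans hpy, hp.2⟩
    have hqm : q ∈ Ioo a v := ⟨hpm.1.trans hq.1, hq.2⟩
    have hanti := deriv_ratio_antitone (L := L) hγ hpos (hmem p hpm).1 hq.1 (hmem q hqm).2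
    obtain ⟨k, hk⟩ := hanti.2 (le_antisymm hanti.1 (by
      rw [hderiv p hpm, hderiv q hqm]
      exact monotoneOn_deriv_div_xiD1 hc hconv (hmem p hpm) (hmem q hqm) hq.1.le))
    rw [hk s ⟨hs.1, hps⟩, hk t ⟨ht.1, hpt⟩]
  · push Not at hz
    have hne : ∀ᵐ t ∂volume.restrict (Ioo 0 v), t ≠ a :=
      ae_restrict_of_ae (by simp [ae_iff])
    have hconst := calU.eqOn_Ioo_of_ae_eq hγ le_rfl hv.2.le (k := γ a) (by
      filter_upwards [hae, hne, ae_restrict_mem measurableSet_Ioo] with t ht hta htm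
      refine ht fun h0 => ?_
      obtain ⟨κ, hκ, h⟩ := hgap t (hIoo t htm)
      rw [h0, mul_zero] at h
      rcases lt_or_gt_of_ne hta with h' | h'
      · exact (hneg t ⟨htm.1, h'⟩).ne h
      · exact hz t ⟨h', htm.2⟩ h)
    intro s hs t ht
    rw [hconst s hs, hconst t ht]

/-- The minimizer is constant on each side of some point of `[0, 1]`. -/
lemma exists_constant_on_both_sides (hc : ∃ k ∈ Finset.Icc 2 P, c k ≠ 0)
    (hconv : ConvexOn ℝ (Ioo (0 : ℝ) 1) (fun s => s / xiD1 P c s)) (hγ : γ ∈ calU)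
    (hL : ∫ x in (0 : ℝ)..1, γ x ≤ L) (hfin : energy P c L γ ≠ ⊤)
    (hmin : ∀ β ∈ calU, ∀ M, ∫ x in (0 : ℝ)..1, β x ≤ M → energy P c L γ ≤ energy P c M β) :
    ∃ b ∈ Icc (0 : ℝ) 1, (∀ s ∈ Ioo 0 b, ∀ t ∈ Ioo 0 b, γ s = γ t) ∧
      ∀ s ∈ Ioo b 1, ∀ t ∈ Ioo b 1, γ s = γ t := by
  have hpos := profile_pos_of_energy_ne_top hγ hfin
  set S := insert 0 {s | s ∈ Ioo (0 : ℝ) 1 ∧ 0 ≤ ratioGap P c L γ s} with hS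
  have hle : ∀ s ∈ S, s ≤ 1 := by
    rintro s (rfl | hs)
    · exact zero_le_one
    · exact hs.1.2.le
  have hbdd : BddAbove S := ⟨1, hle⟩
  have h0S : (0 : ℝ) ∈ S := mem_insert _ _
  have hb0 : 0 ≤ sSup S := le_csSup hbdd h0S
  refine ⟨sSup S, ⟨hb0, csSup_le ⟨0, h0S⟩ hle⟩, ?_, ?_⟩
  · intro s hs t ht
    obtain ⟨v, hvS, hv⟩ := exists_lt_of_lt_csSup ⟨0, h0S⟩ (max_lt hs.2 ht.2)
    have hsv := (le_max_left _ _).trans_lt hv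
    have htv := (le_max_right _ _).trans_lt hv
    rcases hvS with rfl | hvS
    · exact absurd hs.1 (not_lt.2 hsv.le)
    · exact eq_of_ratioGap_nonneg hc hconv hγ hL hfin hmin hvS.1 hvS.2 s ⟨hs.1, hsv⟩ t
        ⟨ht.1, htv⟩
  · have hneg : ∀ t ∈ Ioo (sSup S) 1, gapFun P c L γ t < 0 := by
      intro t ht
      have ht1 : t ∈ Ioo (0 : ℝ) 1 := ⟨hb0.trans_lt ht.1, ht.2⟩
      obtain ⟨κ, hκ, h⟩ := ratioGap_eq hc hγ hpos ht1
      by_contra! hG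
      refine absurd (le_csSup hbdd (mem_insert_of_mem 0 ⟨ht1, ?_⟩)) (not_le.2 ht.1)
      rw [h]
      exact mul_nonneg hκ.le hG
    intro s hs t ht
    obtain ⟨v, hv⟩ := exists_between (max_lt hs.2 ht.2)
    have hsv := (le_max_left _ _).trans_lt hv.1
    have htv := (le_max_right _ _).trans_lt hv.1
    have hae := ae_eq_of_gapFun_sign hγ hL hfin hmin hb0 (hs.1.trans hsv).le le_rfl
      ⟨(hb0.trans_lt hs.1).trans hsv, hv.2⟩ (fun t ht => (hneg t ⟨ht.1, ht.2.trans hv.2⟩).le)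
      (by simp)
    have hconst := calU.eqOn_Ioo_of_ae_eq hγ hb0 hv.2.le (k := γ v) (by
      filter_upwards [hae, ae_restrict_mem measurableSet_Ioo] with t ht htm
      exact ht (hneg t ⟨htm.1, htm.2.trans hv.2⟩).ne)
    rw [hconst s ⟨hs.1, hsv⟩, hconst t ⟨ht.1, htv⟩]

/-- An order parameter that is constant on each side of a point is a single step function. -/
lemma calU.exists_step (hγ : γ ∈ calU) {b : ℝ} (hb : b ∈ Icc (0 : ℝ) 1)
    (hlow : ∀ s ∈ Ioo 0 b, ∀ t ∈ Ioo 0 b, γ s = γ t)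
    (hhigh : ∀ s ∈ Ioo b 1, ∀ t ∈ Ioo b 1, γ s = γ t) :
    ∃ c₀ c₁ : ℝ, 0 ≤ c₀ ∧ 0 ≤ c₁ ∧ ∃ t₀ ∈ Ico (0 : ℝ) 1,
      ∀ᵐ t ∂(volume.restrict (Ico (0 : ℝ) 1)),
        γ t = c₀ + c₁ * (if t₀ ≤ t then 1 else 0) := by
  have hne : ∀ x : ℝ, ∀ᵐ t ∂volume.restrict (Ico (0 : ℝ) 1), t ≠ x := fun x =>
    ae_restrict_of_ae (by simp [ae_iff])
  have hconst : (∀ s ∈ Ioo (0 : ℝ) 1, ∀ t ∈ Ioo (0 : ℝ) 1, γ s = γ t) →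
      ∃ c₀ c₁ : ℝ, 0 ≤ c₀ ∧ 0 ≤ c₁ ∧ ∃ t₀ ∈ Ico (0 : ℝ) 1,
        ∀ᵐ t ∂(volume.restrict (Ico (0 : ℝ) 1)),
          γ t = c₀ + c₁ * (if t₀ ≤ t then 1 else 0) := by
    intro h
    refine ⟨γ (1 / 2), 0, hγ.1 _ (by norm_num), le_rfl, 0, by simp, ?_⟩
    filter_upwards [hne 0, ae_restrict_mem measurableSet_Ico] with t ht htm
    rw [zero_mul, add_zero]
    exact h t ⟨htm.1.lt_of_ne' ht, htm.2⟩ _ (by norm_num)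
  rcases hb.1.eq_or_lt with rfl | hb0
  · exact hconst hhigh
  rcases hb.2.eq_or_lt with rfl | hb1
  · exact hconst hlow
  have hl : b / 2 ∈ Ioo 0 b := ⟨by linarith, by linarith⟩
  have hh : (b + 1) / 2 ∈ Ioo b 1 := ⟨by linarith, by linarith⟩
  have hl' : b / 2 ∈ Ico (0 : ℝ) 1 := ⟨hl.1.le, hl.2.trans hb1⟩
  have hh' : (b + 1) / 2 ∈ Ico (0 : ℝ) 1 := ⟨(hb0.trans hh.1).le, hh.2⟩
  refine ⟨γ (b / 2), γ ((b + 1) / 2) - γ (b / 2), hγ.1 _ hl',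
    sub_nonneg.2 (hγ.2.1 hl' hh' (hl.2.trans hh.1).le), b, ⟨hb0.le, hb1⟩, ?_⟩
  filter_upwards [hne 0, hne b, ae_restrict_mem measurableSet_Ico] with t ht0 htb htm
  rcases lt_or_gt_of_ne htb with h | h
  · rw [if_neg (not_le.2 h), mul_zero, add_zero]
    exact hlow t ⟨htm.1.lt_of_ne' ht0, h⟩ _ hl
  · rw [if_pos h.le, mul_one, add_sub_cancel]
    exact hhigh t ⟨h, htm.2⟩ _ hh

end Structure

/-- sufficient condition for one-step replica symmetry breaking at zero
temperature in the spherical model: the Parisi minimizer is a.e. a single step function. -/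
theorem statement_18 (P : ℕ) (hP : 2 ≤ P) (c : ℕ → ℝ)
    (hc : ∃ k ∈ Finset.Icc 2 P, c k ≠ 0)
    (z : ℝ) (hz : 0 < z)
    (hzeq : 1 / xiD1 P c 1 = ((1 + z) / z ^ 2) * Real.log (1 + z) - 1 / z)
    (hzuniq : ∀ w : ℝ, 0 < w →
      1 / xiD1 P c 1 = ((1 + w) / w ^ 2) * Real.log (1 + w) - 1 / w → w = z)
    (hfield : xiD2 P c 0 * (1 + z) < xiD1 P c 1)
    (hconv : ConvexOn ℝ (Set.Ioo (0 : ℝ) 1) (fun s => s / xiD1 P c s))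
    (γstar : ℝ → ℝ) (hγU : γstar ∈ calU)
    (hγmin : PFunE P c γstar = ⨅ γ ∈ calU, PFunE P c γ) :
    ∃ c₀ c₁ : ℝ, 0 ≤ c₀ ∧ 0 ≤ c₁ ∧ ∃ t₀ ∈ Set.Ico (0 : ℝ) 1,
      ∀ᵐ t ∂(volume.restrict (Set.Ico (0 : ℝ) 1)),
        γstar t = c₀ + c₁ * (if t₀ ≤ t then 1 else 0) := by
  obtain ⟨L, hL, hfin, hmin⟩ := exists_energy_minimizer hc hγU hγmin
  obtain ⟨b, hb, hlow, hhigh⟩ := exists_constant_on_both_sides hc hconv hγU hL hfin hmin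
  exact calU.exists_step hγU hb hlow hhigh
end
end

section
/- For every β > 0, δ, ε, t > 0 and every integer k ≥ 1 there exists c > 0 such that for every N ≥ 1 and every m ∈ ℝ^N with ‖m‖₂² ≤ N and μ_N^{⊗k}( Band_k(m,δ,ε) ) > 0, P( | TAP_{N,β,k}(m,δ,ε) − E[ TAP_{N,β,k}(m,δ,ε) ] | < t ) > 1 − e^{−cN}. -/
open MeasureTheory ProbabilityTheory Filter
open scoped ENNReal NNReal

noncomputable section

/-- The replicated TAP free energy `TAP_{N,β,k}(m,δ,ε)` of couplings `g`. -/
def TAPk (N P : ℕ) (c : ℕ → ℝ) (k : ℕ) (β δ ε : ℝ)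
    (g : (j : ℕ) → (Fin j → Fin N) → ℝ) (m : Fin N → ℝ) : ℝ :=
  Real.log (∫ σs in bandK N k m δ ε,
      Real.exp (β * ∑ i, (hamiltonian N P c g (σs i) - hamiltonian N P c g m))
      ∂(Measure.pi fun _ : Fin k => sphereUniform N)) / (k * N)


/-- The standard Gaussian measure on `ι → ℝ`. -/
abbrev gaussPi (ι : Type*) [Fintype ι] : Measure (ι → ℝ) :=
  Measure.pi fun _ : ι => gaussianReal 0 1

section Gaussian

variable {ι : Type*} [Fintype ι]

lemma isGaussian_gaussPi : IsGaussian (gaussPi ι) := by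
  rw [← isGaussian_map_equiv_iff (PiLp.continuousLinearEquiv 2 ℝ (fun _ : ι => ℝ)).symm]
  have h := map_pi_eq_stdGaussian (ι := ι)
  have : (gaussPi ι).map (PiLp.continuousLinearEquiv 2 ℝ (fun _ : ι => ℝ)).symm
      = stdGaussian (EuclideanSpace ℝ ι) := h
  rw [this]
  infer_instance

lemma gaussPi_map_rotation (θ : ℝ) :
    ((gaussPi ι).prod (gaussPi ι)).map (ContinuousLinearMap.rotation θ)
      = (gaussPi ι).prod (gaussPi ι) := by
  have := isGaussian_gaussPi (ι := ι)
  refine IsGaussian.map_rotation_eq_self ?_ θ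
  ext i
  simp only [id_eq, Pi.zero_apply]
  rw [eval_integral (fun i => (integrable_eval IsGaussian.integrable_id))]
  have := integral_comp_eval (μ := fun _ : ι => gaussianReal 0 1) (i := i) (f := fun x : ℝ => x)
    (by fun_prop)
  simpa using this

instance isOpenPosMeasure_gaussPi : (gaussPi ι).IsOpenPosMeasure := by
  have : (gaussianReal 0 1).IsOpenPosMeasure :=
    (gaussianReal_absolutelyContinuous' 0 one_ne_zero).isOpenPosMeasure
  infer_instance

/-- Exponentials of multiples of the `ℓ¹` norm are integrable. -/
lemma integrable_exp_mul_sum_abs (s : ℝ) :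
    Integrable (fun x : ι → ℝ => Real.exp (s * ∑ i, |x i|)) (gaussPi ι) := by
  have h : Integrable (fun x : ι → ℝ => ∏ i, Real.exp (s * |x i|)) (gaussPi ι) :=
    Integrable.fintype_prod (f := fun _ y => Real.exp (s * |y|)) fun _ =>
      integrable_exp_mul_abs (integrable_exp_mul_gaussianReal s)
        (integrable_exp_mul_gaussianReal (-s))
  simpa only [← Real.exp_sum, ← Finset.mul_sum] using h

lemma tendsto_integral_exp_mul_sum_abs (s : ℝ) :
    Tendsto (fun n : ℕ => ∫ x : ι → ℝ, Real.exp (s / n * ∑ i, |x i|) ∂(gaussPi ι))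
      atTop (nhds 1) := by
  have h : Tendsto (fun n : ℕ => ∫ x : ι → ℝ, Real.exp (s / n * ∑ i, |x i|) ∂(gaussPi ι))
      atTop (nhds (∫ _ : ι → ℝ, (1 : ℝ) ∂(gaussPi ι))) := by
    refine tendsto_integral_of_dominated_convergence
      (fun x => Real.exp (|s| * ∑ i, |x i|)) (fun n => (by fun_prop : Continuous _).aestronglyMeasurable)
      (integrable_exp_mul_sum_abs _) (fun n => Eventually.of_forall fun x => ?_)
      (Eventually.of_forall fun x => ?_)
    · rw [Real.norm_eq_abs, Real.abs_exp, Real.exp_le_exp]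
      have : 0 ≤ ∑ i, |x i| := Finset.sum_nonneg fun i _ => abs_nonneg _
      refine mul_le_mul_of_nonneg_right ?_ this
      rcases Nat.eq_zero_or_pos n with rfl | hn
      · simp
      · have h1 : (1 : ℝ) ≤ n := by exact_mod_cast hn
        calc s / n ≤ |s| / n := by gcongr; exact le_abs_self s
          _ ≤ |s| := div_le_self (abs_nonneg _) h1
    · have h0 := (tendsto_const_div_atTop_nhds_zero_nat s).mul_const (∑ i, |x i|)
      rw [zero_mul] at h0
      simpa [Function.comp_def] using (Real.continuous_exp.tendsto 0).comp h0
  simpa using h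

lemma integral_exp_dot (v : ι → ℝ) :
    ∫ x, Real.exp (∑ i, v i * x i) ∂(gaussPi ι) = Real.exp ((∑ i, v i ^ 2) / 2) := by
  have h := integral_fintype_prod_eq_prod (fun (i : ι) (y : ℝ) => Real.exp (v i * y))
    (μ := fun _ : ι => gaussianReal 0 1)
  simp only [← Real.exp_sum] at h
  rw [h]
  have h1 : ∀ t : ℝ, ∫ y, Real.exp (t * y) ∂(gaussianReal 0 1) = Real.exp (t ^ 2 / 2) := by
    intro t
    have := congrFun (mgf_id_gaussianReal (μ := 0) (v := 1)) t
    simpa [mgf] using this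
  simp only [h1, ← Real.exp_sum, Finset.sum_div]

lemma integrable_exp_dot (v : ι → ℝ) :
    Integrable (fun x => Real.exp (∑ i, v i * x i)) (gaussPi ι) := by
  have h : Integrable (fun x : ι → ℝ => ∏ i, Real.exp (v i * x i)) (gaussPi ι) :=
    Integrable.fintype_prod (f := fun i y => Real.exp (v i * y)) fun i =>
      integrable_exp_mul_gaussianReal (v i)
  simpa only [← Real.exp_sum] using h

lemma lintegral_exp_dot (v : ι → ℝ) :
    ∫⁻ x, ENNReal.ofReal (Real.exp (∑ i, v i * x i)) ∂(gaussPi ι)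
      = ENNReal.ofReal (Real.exp ((∑ i, v i ^ 2) / 2)) := by
  rw [← integral_exp_dot, ofReal_integral_eq_lintegral_ofReal (integrable_exp_dot v)
    (Eventually.of_forall fun _ => (Real.exp_pos _).le)]

/-- `v` selects a subgradient of `f` at every point. -/
def IsSubgradient (f : (ι → ℝ) → ℝ) (v : (ι → ℝ) → ι → ℝ) : Prop :=
  ∀ y z, f z - f y ≤ ∑ i, v z i * (z i - y i)

lemma abs_le_sqrt_of_sum_sq_le {B : ℝ} {u : ι → ℝ} (hu : ∑ i, u i ^ 2 ≤ B) (i : ι) :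
    |u i| ≤ √B :=
  Real.abs_le_sqrt ((Finset.single_le_sum (f := fun i => u i ^ 2)
    (fun _ _ => sq_nonneg _) (Finset.mem_univ i)).trans hu)

lemma sum_mul_le_sqrt_mul_sum_abs {B : ℝ} {u : ι → ℝ} (hu : ∑ i, u i ^ 2 ≤ B) (w : ι → ℝ) :
    ∑ i, u i * w i ≤ √B * ∑ i, |w i| := by
  rw [Finset.mul_sum]
  refine Finset.sum_le_sum fun i _ => (le_abs_self _).trans ?_
  rw [abs_mul]
  exact mul_le_mul_of_nonneg_right (abs_le_sqrt_of_sum_sq_le hu i) (abs_nonneg _)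

namespace IsSubgradient

variable {f : (ι → ℝ) → ℝ} {v : (ι → ℝ) → ι → ℝ} {B : ℝ}

lemma abs_sub_le (hf : IsSubgradient f v) (hv : ∀ z, ∑ i, v z i ^ 2 ≤ B) (z y : ι → ℝ) :
    |f z - f y| ≤ √B * ∑ i, |z i - y i| := by
  rw [abs_sub_le_iff]
  refine ⟨(hf y z).trans (sum_mul_le_sqrt_mul_sum_abs (hv z) _), ?_⟩
  refine (hf z y).trans ((sum_mul_le_sqrt_mul_sum_abs (hv y) _).trans_eq ?_)
  simp only [abs_sub_comm]

/-- One infinitesimal rotation step: the increment along a small rotation has a Gaussian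
exponential moment. -/
lemma lintegral_exp_step_le (hvm : Measurable v) (hv : ∀ z, ∑ i, v z i ^ 2 ≤ B)
    {l : ℝ} (hl : 0 ≤ l) {n : ℕ} (hn : 0 < n) :
    ∫⁻ p : (ι → ℝ) × (ι → ℝ), ENNReal.ofReal (Real.exp (n * l * ∑ i, v p.1 i *
        ((1 - Real.cos (Real.pi / (2 * n))) * p.1 i + Real.sin (Real.pi / (2 * n)) * p.2 i)))
        ∂((gaussPi ι).prod (gaussPi ι))
      ≤ ENNReal.ofReal ((∫ x : ι → ℝ, Real.exp (l * √B * Real.pi ^ 2 / 8 / n * ∑ i, |x i|)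
          ∂(gaussPi ι)) * Real.exp (l ^ 2 * Real.pi ^ 2 * B / 8)) := by
  set h := Real.pi / (2 * n) with hh
  have hn' : (0 : ℝ) < n := by exact_mod_cast hn
  have hpos : 0 < h := by positivity
  have hnh : n * h = Real.pi / 2 := by rw [hh]; field_simp
  have hcos : n * (1 - Real.cos h) ≤ Real.pi ^ 2 / 8 / n := by
    have h1 := Real.one_sub_sq_div_two_le_cos (x := h)
    calc n * (1 - Real.cos h) ≤ n * (h ^ 2 / 2) := by gcongr; linarith
      _ = Real.pi ^ 2 / 8 / n := by rw [hh]; field_simp; norm_num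
  have hcos0 : 0 ≤ 1 - Real.cos h := by linarith [Real.cos_le_one h]
  have hsin : (n * Real.sin h) ^ 2 ≤ Real.pi ^ 2 / 4 := by
    have h1 : |n * Real.sin h| ≤ Real.pi / 2 := by
      rw [abs_mul, abs_of_pos hn', ← hnh]
      gcongr
      have h2 := Real.abs_sin_le_abs (x := h)
      rwa [abs_of_pos hpos] at h2
    calc (n * Real.sin h) ^ 2 ≤ (Real.pi / 2) ^ 2 := sq_le_sq' (abs_le.1 h1).1 (abs_le.1 h1).2
      _ = _ := by ring
  rw [lintegral_prod _ (by fun_prop)]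
  calc _ ≤ ∫⁻ z : ι → ℝ, ENNReal.ofReal (Real.exp (l * √B * Real.pi ^ 2 / 8 / n * ∑ i, |z i|))
          * ENNReal.ofReal (Real.exp (l ^ 2 * Real.pi ^ 2 * B / 8)) ∂(gaussPi ι) := by
        refine lintegral_mono fun z => ?_
        have hsplit : ∀ w : ι → ℝ, ENNReal.ofReal (Real.exp (n * l * ∑ i, v z i *
            ((1 - Real.cos h) * z i + Real.sin h * w i)))
            = ENNReal.ofReal (Real.exp (n * l * (1 - Real.cos h) * ∑ i, v z i * z i)) *
              ENNReal.ofReal (Real.exp (∑ i, (n * l * Real.sin h * v z i) * w i)) := by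
          intro w
          rw [← ENNReal.ofReal_mul (Real.exp_pos _).le, ← Real.exp_add]
          congr 2
          simp only [Finset.mul_sum, ← Finset.sum_add_distrib]
          exact Finset.sum_congr rfl fun i _ => by ring
        simp only [hsplit]
        rw [lintegral_const_mul _ (by fun_prop), lintegral_exp_dot]
        refine mul_le_mul' (ENNReal.ofReal_le_ofReal (Real.exp_le_exp.2 ?_))
          (ENNReal.ofReal_le_ofReal (Real.exp_le_exp.2 ?_))
        · calc n * l * (1 - Real.cos h) * ∑ i, v z i * z i
              ≤ n * l * (1 - Real.cos h) * (√B * ∑ i, |z i|) := by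
                gcongr
                exact sum_mul_le_sqrt_mul_sum_abs (hv z) _
            _ = (n * (1 - Real.cos h)) * (l * √B * ∑ i, |z i|) := by ring
            _ ≤ (Real.pi ^ 2 / 8 / n) * (l * √B * ∑ i, |z i|) := by
                gcongr
            _ = _ := by ring
        · calc (∑ i, (n * l * Real.sin h * v z i) ^ 2) / 2
              = (n * Real.sin h) ^ 2 * (l ^ 2 * ∑ i, v z i ^ 2) / 2 := by
                simp only [Finset.mul_sum]
                congr 1
                exact Finset.sum_congr rfl fun i _ => by ring
            _ ≤ Real.pi ^ 2 / 4 * (l ^ 2 * B) / 2 := by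
                gcongr
                exact hv z
            _ = _ := by ring
    _ = _ := by
        rw [lintegral_mul_const _ (by fun_prop), ENNReal.ofReal_mul
          (integral_nonneg fun _ => (Real.exp_pos _).le),
          ofReal_integral_eq_lintegral_ofReal (integrable_exp_mul_sum_abs _)
            (Eventually.of_forall fun _ => (Real.exp_pos _).le)]

/-- Maurey–Pisier exponential bound for two independent copies. -/
lemma lintegral_exp_sub_le (hf : IsSubgradient f v) (hvm : Measurable v)
    (hv : ∀ z, ∑ i, v z i ^ 2 ≤ B) {l : ℝ} (hl : 0 ≤ l) :
    ∫⁻ p : (ι → ℝ) × (ι → ℝ), ENNReal.ofReal (Real.exp (l * (f p.2 - f p.1)))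
        ∂((gaussPi ι).prod (gaussPi ι))
      ≤ ENNReal.ofReal (Real.exp (l ^ 2 * Real.pi ^ 2 * B / 8)) := by
  have hlim := ENNReal.tendsto_ofReal
    ((tendsto_integral_exp_mul_sum_abs (ι := ι) (l * √B * Real.pi ^ 2 / 8)).mul_const
      (Real.exp (l ^ 2 * Real.pi ^ 2 * B / 8)))
  rw [one_mul] at hlim
  refine ge_of_tendsto hlim ((eventually_gt_atTop 0).mono fun n hn => ?_)
  refine le_trans ?_ (lintegral_exp_step_le hvm hv hl hn)
  set h := Real.pi / (2 * n) with hh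
  set g : (ι → ℝ) × (ι → ℝ) → ℝ≥0∞ := fun p => ENNReal.ofReal (Real.exp (n * l * ∑ i, v p.1 i *
        ((1 - Real.cos h) * p.1 i + Real.sin h * p.2 i))) with hg
  have hgm : Measurable g := by fun_prop
  have hn' : (0 : ℝ) < n := by exact_mod_cast hn
  have hpt : ∀ p : (ι → ℝ) × (ι → ℝ), ENNReal.ofReal (Real.exp (l * (f p.2 - f p.1)))
      ≤ ∑ j ∈ Finset.range n, ENNReal.ofReal (1 / n) *
        g (ContinuousLinearMap.rotation ((j + 1 : ℕ) * h) p) := by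
    intro p
    set Z : ℕ → ι → ℝ := fun j => Real.cos (j * h) • p.1 + Real.sin (j * h) • p.2 with hZ
    have hZ0 : Z 0 = p.1 := by simp [hZ]
    have hZn : Z n = p.2 := by
      have : (n : ℝ) * h = Real.pi / 2 := by rw [hh]; field_simp
      simp [hZ, this]
    have htel : l * (f p.2 - f p.1) =
        ∑ j ∈ Finset.range n, (1 / n : ℝ) * (n * l * (f (Z (j + 1)) - f (Z j))) := by
      rw [← Finset.mul_sum, ← Finset.mul_sum, Finset.sum_range_sub (fun j => f (Z j)), hZ0, hZn]
      field_simp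
    have hconv := convexOn_exp.map_sum_le (t := Finset.range n) (w := fun _ => (1 / n : ℝ))
      (p := fun j => n * l * (f (Z (j + 1)) - f (Z j))) (fun _ _ => by positivity)
      (by simp; field_simp) (fun _ _ => Set.mem_univ _)
    simp only [smul_eq_mul] at hconv
    rw [← htel] at hconv
    refine (ENNReal.ofReal_le_ofReal hconv).trans ?_
    rw [ENNReal.ofReal_sum_of_nonneg (fun _ _ => by positivity)]
    refine Finset.sum_le_sum fun j _ => ?_
    rw [ENNReal.ofReal_mul (by positivity)]
    gcongr
    refine ENNReal.ofReal_le_ofReal (Real.exp_le_exp.2 ?_)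
    refine mul_le_mul_of_nonneg_left ((hf _ _).trans_eq ?_) (by positivity)
    rw [ContinuousLinearMap.rotation_apply]
    refine Finset.sum_congr rfl fun i _ => ?_
    have hθ : (j : ℝ) * h = ((j + 1 : ℕ) : ℝ) * h - h := by push_cast; ring
    have e : Z j i = Real.cos (((j + 1 : ℕ) : ℝ) * h - h) * p.1 i
        + Real.sin (((j + 1 : ℕ) : ℝ) * h - h) * p.2 i := by
      rw [← hθ]; rfl
    rw [e, Real.cos_sub, Real.sin_sub]
    simp only [hZ, Pi.add_apply, Pi.smul_apply, smul_eq_mul]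
    ring
  calc _ ≤ ∫⁻ p, ∑ j ∈ Finset.range n, ENNReal.ofReal (1 / n) *
        g (ContinuousLinearMap.rotation ((j + 1 : ℕ) * h) p)
          ∂((gaussPi ι).prod (gaussPi ι)) := lintegral_mono hpt
    _ = ∑ j ∈ Finset.range n, ENNReal.ofReal (1 / n) *
          ∫⁻ p, g p ∂((gaussPi ι).prod (gaussPi ι)) := by
        rw [lintegral_finsetSum _ (fun j _ => by fun_prop)]
        refine Finset.sum_congr rfl fun j _ => ?_
        rw [lintegral_const_mul _ (by fun_prop)]
        conv_rhs => rw [← gaussPi_map_rotation (((j + 1 : ℕ) : ℝ) * h)]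
        rw [lintegral_map hgm (by fun_prop)]
    _ = ∫⁻ p, g p ∂((gaussPi ι).prod (gaussPi ι)) := by
        rw [Finset.sum_const, Finset.card_range, nsmul_eq_mul, ← mul_assoc,
          ← ENNReal.ofReal_natCast, ← ENNReal.ofReal_mul (by positivity), mul_one_div_cancel hn'.ne',
          ENNReal.ofReal_one, one_mul]

lemma continuous (hf : IsSubgradient f v) (hv : ∀ z, ∑ i, v z i ^ 2 ≤ B) : Continuous f := by
  rw [continuous_iff_continuousAt]
  intro y
  rw [ContinuousAt, tendsto_iff_dist_tendsto_zero]
  refine squeeze_zero (fun _ => dist_nonneg)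
    (fun z => (Real.dist_eq _ _).trans_le (hf.abs_sub_le hv z y)) ?_
  have h : Continuous fun z : ι → ℝ => √B * ∑ i, |z i - y i| := by fun_prop
  simpa using h.tendsto y

lemma abs_le (hf : IsSubgradient f v) (hv : ∀ z, ∑ i, v z i ^ 2 ≤ B) (x : ι → ℝ) :
    |f x| ≤ |f 0| + √B * ∑ i, |x i| := by
  have h := hf.abs_sub_le hv x 0
  simp only [Pi.zero_apply, sub_zero] at h
  linarith [abs_sub_abs_le_abs_sub (f x) (f 0)]

lemma integrable_exp_mul (hf : IsSubgradient f v) (hv : ∀ z, ∑ i, v z i ^ 2 ≤ B) (l : ℝ) :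
    Integrable (fun x => Real.exp (l * f x)) (gaussPi ι) := by
  have hc := hf.continuous hv
  refine ((integrable_exp_mul_sum_abs (ι := ι) (|l| * √B)).const_mul
    (Real.exp (|l| * |f 0|))).mono' (by fun_prop : Continuous _).aestronglyMeasurable
    (Eventually.of_forall fun x => ?_)
  rw [Real.norm_eq_abs, Real.abs_exp, ← Real.exp_add, Real.exp_le_exp]
  calc l * f x ≤ |l * f x| := le_abs_self _
    _ = |l| * |f x| := abs_mul _ _
    _ ≤ |l| * (|f 0| + √B * ∑ i, |x i|) := by gcongr; exact hf.abs_le hv x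
    _ = _ := by ring

lemma integrable (hf : IsSubgradient f v) (hv : ∀ z, ∑ i, v z i ^ 2 ≤ B) :
    Integrable f (gaussPi ι) := by
  refine ((hf.integrable_exp_mul hv 1).add (hf.integrable_exp_mul hv (-1))).mono'
    (hf.continuous hv).aestronglyMeasurable (Eventually.of_forall fun x => ?_)
  rw [Real.norm_eq_abs, Pi.add_apply, abs_le']
  have h1 := Real.add_one_le_exp (1 * f x)
  have h2 := Real.add_one_le_exp (-1 * f x)
  have h3 := Real.exp_pos (1 * f x)
  have h4 := Real.exp_pos (-1 * f x)
  constructor <;> linarith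

/-- Jensen's inequality for `exp` applied to `a + l * f`. -/
lemma ofReal_exp_add_mul_integral_le (hf : IsSubgradient f v) (hv : ∀ z, ∑ i, v z i ^ 2 ≤ B)
    (a l : ℝ) :
    ENNReal.ofReal (Real.exp (a + l * ∫ y, f y ∂(gaussPi ι)))
      ≤ ∫⁻ y, ENNReal.ofReal (Real.exp (a + l * f y)) ∂(gaussPi ι) := by
  have hi := hf.integrable hv
  have he : Integrable (fun y => Real.exp (a + l * f y)) (gaussPi ι) := by
    simpa only [Real.exp_add] using (hf.integrable_exp_mul hv l).const_mul (Real.exp a)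
  rw [← ofReal_integral_eq_lintegral_ofReal he (Eventually.of_forall fun _ => (Real.exp_pos _).le)]
  refine ENNReal.ofReal_le_ofReal ?_
  have h := convexOn_exp.map_integral_le (μ := gaussPi ι) (f := fun y => a + l * f y)
    Real.continuous_exp.continuousOn isClosed_univ (by simp)
    ((integrable_const a).add (hi.const_mul l)) he
  rwa [integral_add (integrable_const a) (hi.const_mul l), integral_const_mul, integral_const,
    probReal_univ, one_smul] at h

lemma measure_ge_le_of_lintegral_exp_le {α : Type*} [MeasurableSpace α] {μ : Measure α}
    {g : α → ℝ} (hg : Measurable g) {C s : ℝ} (hC : 0 < C) (hs : 0 ≤ s)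
    (h : ∀ l : ℝ, 0 ≤ l → ∫⁻ x, ENNReal.ofReal (Real.exp (l * g x)) ∂μ
      ≤ ENNReal.ofReal (Real.exp (l ^ 2 * C))) :
    μ {x | s ≤ g x} ≤ ENNReal.ofReal (Real.exp (-(s ^ 2 / (4 * C)))) := by
  set l := s / (2 * C) with hl
  have hl0 : 0 ≤ l := by positivity
  have h1 : ∀ x ∈ {x | s ≤ g x}, ENNReal.ofReal (Real.exp (l * s))
      ≤ ENNReal.ofReal (Real.exp (l * g x)) := fun x hx =>
    ENNReal.ofReal_le_ofReal (Real.exp_le_exp.2 (mul_le_mul_of_nonneg_left hx hl0))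
  have h2 := (mul_meas_ge_le_lintegral (μ := μ)
    (f := fun x => ENNReal.ofReal (Real.exp (l * g x))) (by fun_prop)
    (ENNReal.ofReal (Real.exp (l * s)))).trans (h l hl0)
  have h3 : ENNReal.ofReal (Real.exp (l * s)) * μ {x | s ≤ g x}
      ≤ ENNReal.ofReal (Real.exp (l ^ 2 * C)) := (by gcongr; exact h1 _ : _ ≤ _).trans h2
  calc μ {x | s ≤ g x}
      = ENNReal.ofReal (Real.exp (-(l * s))) *
          (ENNReal.ofReal (Real.exp (l * s)) * μ {x | s ≤ g x}) := by
        rw [← mul_assoc, ← ENNReal.ofReal_mul (Real.exp_pos _).le, ← Real.exp_add]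
        simp
    _ ≤ ENNReal.ofReal (Real.exp (-(l * s))) * ENNReal.ofReal (Real.exp (l ^ 2 * C)) := by
        gcongr
    _ = _ := by
        rw [← ENNReal.ofReal_mul (Real.exp_pos _).le, ← Real.exp_add]
        congr 2
        rw [hl]
        field_simp
        ring

/-- Gaussian concentration for functions with bounded subgradients. -/
theorem measure_abs_sub_integral_ge_le (hf : IsSubgradient f v) (hvm : Measurable v)
    (hv : ∀ z, ∑ i, v z i ^ 2 ≤ B) (hB : 0 < B) {s : ℝ} (hs : 0 ≤ s) :
    gaussPi ι {x | s ≤ |f x - ∫ y, f y ∂(gaussPi ι)|}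
      ≤ ENNReal.ofReal (2 * Real.exp (-(2 * s ^ 2 / (Real.pi ^ 2 * B)))) := by
  set M := ∫ y, f y ∂(gaussPi ι) with hM
  have hc := hf.continuous hv
  have hfm : Measurable f := hc.measurable
  have hC : 0 < Real.pi ^ 2 * B / 8 := by positivity
  have hexp : -(2 * s ^ 2 / (Real.pi ^ 2 * B)) = -(s ^ 2 / (4 * (Real.pi ^ 2 * B / 8))) := by
    field_simp
    ring
  have hbound : ∀ l : ℝ, 0 ≤ l →
      ∫⁻ p : (ι → ℝ) × (ι → ℝ), ENNReal.ofReal (Real.exp (l * (f p.2 - f p.1)))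
        ∂((gaussPi ι).prod (gaussPi ι))
      ≤ ENNReal.ofReal (Real.exp (l ^ 2 * (Real.pi ^ 2 * B / 8))) := by
    intro l hl
    have := hf.lintegral_exp_sub_le hvm hv hl
    rwa [show l ^ 2 * (Real.pi ^ 2 * B / 8) = l ^ 2 * Real.pi ^ 2 * B / 8 by ring]
  have hup := measure_ge_le_of_lintegral_exp_le (μ := gaussPi ι) (g := fun x => f x - M)
    (by fun_prop) hC hs fun l hl => by
      refine le_trans ?_ (hbound l hl)
      rw [lintegral_prod_symm _ (by fun_prop)]
      refine lintegral_mono fun x => ?_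
      have := hf.ofReal_exp_add_mul_integral_le hv (l * f x) (-l)
      simpa only [neg_mul, ← sub_eq_add_neg, ← mul_sub] using this
  have hlow := measure_ge_le_of_lintegral_exp_le (μ := gaussPi ι) (g := fun x => M - f x)
    (by fun_prop) hC hs fun l hl => by
      refine le_trans ?_ (hbound l hl)
      rw [lintegral_prod _ (by fun_prop)]
      refine lintegral_mono fun x => ?_
      have := hf.ofReal_exp_add_mul_integral_le hv (-(l * f x)) l
      simpa only [neg_add_eq_sub, ← mul_sub] using this
  calc gaussPi ι {x | s ≤ |f x - M|}
      ≤ gaussPi ι ({x | s ≤ f x - M} ∪ {x | s ≤ M - f x}) := by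
        refine measure_mono fun x hx => ?_
        rcases le_abs.1 (show s ≤ |f x - M| from hx) with h | h
        · exact Or.inl h
        · exact Or.inr (by simpa using h)
    _ ≤ _ := (measure_union_le _ _).trans (add_le_add hup hlow)
    _ = _ := by
        rw [← ENNReal.ofReal_add (Real.exp_pos _).le (Real.exp_pos _).le, hexp, two_mul]

lemma const_mul (hf : IsSubgradient f v) {c : ℝ} (hc : 0 ≤ c) :
    IsSubgradient (fun x => c * f x) (fun x i => c * v x i) := by
  intro y z
  simp only [mul_assoc, ← Finset.mul_sum, ← mul_sub]
  exact mul_le_mul_of_nonneg_left (hf y z) hc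

lemma lipschitzWith (hf : IsSubgradient f v) (hv : ∀ z, ∑ i, v z i ^ 2 ≤ B) :
    LipschitzWith (Real.toNNReal (√B * Fintype.card ι)) f := by
  refine LipschitzWith.of_dist_le_mul fun z y => ?_
  rw [Real.dist_eq, Real.coe_toNNReal _ (by positivity), mul_assoc]
  refine (hf.abs_sub_le hv z y).trans (mul_le_mul_of_nonneg_left ?_ (Real.sqrt_nonneg _))
  calc ∑ i, |z i - y i| ≤ ∑ _i : ι, dist z y :=
        Finset.sum_le_sum fun i _ => (Real.dist_eq _ _).symm.trans_le (dist_le_pi_dist z y i)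
    _ = _ := by simp

end IsSubgradient

lemma exists_pos_forall_le_measure_ball {E : Type*} [MetricSpace E] [ProperSpace E]
    [MeasurableSpace E] (μ : Measure E) [μ.IsOpenPosMeasure] (x₀ : E) {R r : ℝ} (hR : 0 ≤ R)
    (hr : 0 < r) :
    ∃ p : ℝ≥0∞, 0 < p ∧ ∀ x ∈ Metric.closedBall x₀ R, p ≤ μ (Metric.ball x r) := by
  obtain ⟨S, -, hfin, hcov⟩ := (isCompact_closedBall x₀ R).finite_cover_balls (half_pos hr)
  have hne : S.Nonempty := by
    have h := hcov (Metric.mem_closedBall_self hR)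
    simp only [Set.mem_iUnion] at h
    obtain ⟨y, hy, -⟩ := h
    exact ⟨y, hy⟩
  obtain ⟨y, -, hmin⟩ := Set.exists_min_image S (fun y => μ (Metric.ball y (r / 2))) hfin hne
  refine ⟨μ (Metric.ball y (r / 2)), Metric.measure_ball_pos μ y (half_pos hr), fun x hx => ?_⟩
  have h := hcov hx
  simp only [Set.mem_iUnion] at h
  obtain ⟨w, hw, hxw⟩ := h
  refine (hmin w hw).trans (measure_mono (Metric.ball_subset_ball' ?_))
  rw [Metric.mem_ball, dist_comm] at hxw
  linarith

lemma exists_mem_closedBall_abs_sub_integral_lt {K : ℝ≥0} {t R : ℝ} (ht : 0 < t) (hR : 1 ≤ R)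
    (hRt : (t + K) * ∫ x : ι → ℝ, ‖x‖ ^ 2 ∂(gaussPi ι) < t * R)
    {f : (ι → ℝ) → ℝ} (hf : LipschitzWith K f) (h0 : f 0 ≤ ∫ x, f x ∂(gaussPi ι)) :
    ∃ x ∈ Metric.closedBall (0 : ι → ℝ) R, |f x - ∫ x, f x ∂(gaussPi ι)| < t := by
  have := isGaussian_gaussPi (ι := ι)
  set M := ∫ x, f x ∂(gaussPi ι) with hM
  by_contra! hcon
  have hnorm : Integrable (fun x : ι → ℝ => ‖x‖) (gaussPi ι) := IsGaussian.integrable_id.norm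
  have hsq : Integrable (fun x : ι → ℝ => ‖x‖ ^ 2) (gaussPi ι) := by
    simpa using (IsGaussian.memLp_two_id (μ := gaussPi ι)).integrable_norm_pow two_ne_zero
  have hlip : ∀ x, |f x - f 0| ≤ K * ‖x‖ := fun x => by
    simpa [Real.dist_eq] using hf.dist_le_mul x 0
  have hint : Integrable f (gaussPi ι) := by
    refine ((integrable_const |f 0|).add (hnorm.const_mul (K : ℝ))).mono'
      hf.continuous.aestronglyMeasurable (Eventually.of_forall fun x => ?_)
    rw [Real.norm_eq_abs, Pi.add_apply]
    linarith [abs_sub_abs_le_abs_sub (f x) (f 0), hlip x]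
  have hR0 : 0 < R := by linarith
  have hball : ∀ x ∈ Metric.closedBall (0 : ι → ℝ) R, f x ≤ M - t := by
    intro x hx
    have hlt : f x < M := by
      by_contra! hge
      obtain ⟨y, hy, hfy⟩ := (convex_closedBall (0 : ι → ℝ) R).isPreconnected.intermediate_value
        (Metric.mem_closedBall_self hR0.le) hx hf.continuous.continuousOn ⟨h0, hge⟩
      have h := hcon y hy
      rw [hfy, sub_self, abs_zero] at h
      linarith
    have h := hcon x hx
    rw [abs_of_neg (by linarith)] at h
    linarith
  have hpt : ∀ x, f x ≤ (M - t) + (t + K) / R * ‖x‖ ^ 2 := by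
    intro x
    have hK := K.coe_nonneg
    by_cases hx : x ∈ Metric.closedBall (0 : ι → ℝ) R
    · have : 0 ≤ (t + K) / R * ‖x‖ ^ 2 := by positivity
      linarith [hball x hx]
    · rw [mem_closedBall_zero_iff, not_le] at hx
      have h1 : ‖x‖ ≤ ‖x‖ ^ 2 / R := by
        rw [le_div_iff₀ hR0]
        nlinarith
      have h2 := (le_abs_self _).trans (hlip x)
      have h3 : (t + K) / R * ‖x‖ ^ 2 = (t + K) * (‖x‖ ^ 2 / R) := by ring
      have h4 : (t + K) * ‖x‖ ≤ (t + K) * (‖x‖ ^ 2 / R) := by gcongr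
      nlinarith
  have hle := integral_mono hint ((integrable_const (M - t)).add (hsq.const_mul ((t + K) / R))) hpt
  rw [integral_add' (integrable_const (M - t)) (hsq.const_mul ((t + K) / R)), integral_const_mul,
    integral_const, probReal_univ, one_smul, ← hM] at hle
  have h5 : (t + K) / R * ∫ x : ι → ℝ, ‖x‖ ^ 2 ∂(gaussPi ι) < t := by
    rw [div_mul_eq_mul_div, div_lt_iff₀ hR0]
    exact hRt
  linarith

/-- Lipschitz functions are close to their Gaussian mean with probability bounded below
uniformly in terms of the Lipschitz constant. -/
theorem exists_pos_forall_lipschitzWith_le_measure (ι : Type*) [Fintype ι] (K : ℝ≥0) {t : ℝ}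
    (ht : 0 < t) :
    ∃ p : ℝ≥0∞, 0 < p ∧ ∀ f : (ι → ℝ) → ℝ, LipschitzWith K f →
      p ≤ gaussPi ι {x | |f x - ∫ y, f y ∂(gaussPi ι)| < t} := by
  set S := ∫ x : ι → ℝ, ‖x‖ ^ 2 ∂(gaussPi ι) with hS
  have hS0 : 0 ≤ S := integral_nonneg fun x => by positivity
  have hK := K.coe_nonneg
  set R := 1 + (t / 2 + K) * S / (t / 2) with hRdef
  have hR : 1 ≤ R := by
    have : 0 ≤ (t / 2 + K) * S / (t / 2) := by positivity
    linarith
  have hRt : (t / 2 + K) * S < t / 2 * R := by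
    rw [hRdef, mul_add, mul_div_cancel₀ _ (by positivity)]
    linarith
  set r := t / (2 * (K + 1)) with hr
  have hr0 : 0 < r := by positivity
  have hKr : K * r ≤ t / 2 := by
    rw [hr, mul_div_assoc', div_le_div_iff₀ (by positivity) (by positivity)]
    nlinarith
  obtain ⟨p, hp, hpb⟩ := exists_pos_forall_le_measure_ball (gaussPi ι) 0 (by linarith : 0 ≤ R) hr0
  refine ⟨p, hp, fun f hf => ?_⟩
  have hex : ∃ x ∈ Metric.closedBall (0 : ι → ℝ) R, |f x - ∫ x, f x ∂(gaussPi ι)| < t / 2 := by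
    rcases le_total (f 0) (∫ x, f x ∂(gaussPi ι)) with h0 | h0
    · exact exists_mem_closedBall_abs_sub_integral_lt (half_pos ht) hR hRt hf h0
    · obtain ⟨x, hx, hfx⟩ := exists_mem_closedBall_abs_sub_integral_lt (half_pos ht) hR hRt
        (f := fun x => -f x) hf.neg (by rw [integral_neg]; exact neg_le_neg h0)
      refine ⟨x, hx, ?_⟩
      rwa [integral_neg, neg_sub_neg, abs_sub_comm] at hfx
  obtain ⟨x, hx, hfx⟩ := hex
  refine (hpb x hx).trans (measure_mono fun y hy => ?_)
  have h1 : |f y - f x| ≤ K * r := by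
    rw [← Real.dist_eq]
    exact (hf.dist_le_mul y x).trans (mul_le_mul_of_nonneg_left (Metric.mem_ball.1 hy).le hK)
  calc |f y - ∫ x, f x ∂(gaussPi ι)|
      ≤ |f y - f x| + |f x - ∫ x, f x ∂(gaussPi ι)| := abs_sub_le _ _ _
    _ < t := by linarith

lemma sum_mul_mul_eq_sum (b w : ι → ℝ) (r : ℝ) :
    (∑ i, b i * w i) * r = ∑ i, w i * (b i * r) := by
  rw [Finset.sum_mul]
  exact Finset.sum_congr rfl fun i _ => by ring

section LogPartition

variable {T : Type*} [MeasurableSpace T] {ν : Measure T} {a : T → ι → ℝ} {B : ℝ}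

/-- The Gibbs average of the features `a`. -/
def gibbsMean (ν : Measure T) (a : T → ι → ℝ) (x : ι → ℝ) (i : ι) : ℝ :=
  (∫ s, a s i * Real.exp (∑ j, a s j * x j) ∂ν) / ∫ s, Real.exp (∑ j, a s j * x j) ∂ν

lemma measurable_gibbsMean [SFinite ν] (ha : Measurable a) : Measurable (gibbsMean ν a) := by
  refine measurable_pi_lambda _ fun i => Measurable.div ?_ ?_
  · exact (StronglyMeasurable.integral_prod_right'
      (f := fun q : (ι → ℝ) × T => a q.2 i * Real.exp (∑ j, a q.2 j * q.1 j))
      (by fun_prop : Measurable _).stronglyMeasurable).measurable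
  · exact (StronglyMeasurable.integral_prod_right'
      (f := fun q : (ι → ℝ) × T => Real.exp (∑ j, a q.2 j * q.1 j))
      (by fun_prop : Measurable _).stronglyMeasurable).measurable

variable [IsFiniteMeasure ν]

lemma integrable_exp_features (ha : Measurable a) (hB : ∀ᵐ s ∂ν, ∑ i, a s i ^ 2 ≤ B)
    (x : ι → ℝ) : Integrable (fun s => Real.exp (∑ j, a s j * x j)) ν := by
  refine Integrable.of_bound (by fun_prop : Measurable _).aestronglyMeasurable
    (Real.exp (√B * ∑ i, |x i|)) (hB.mono fun s hs => ?_)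
  rw [Real.norm_eq_abs, Real.abs_exp, Real.exp_le_exp]
  exact sum_mul_le_sqrt_mul_sum_abs hs x

lemma integrable_mul_exp_features (ha : Measurable a) (hB : ∀ᵐ s ∂ν, ∑ i, a s i ^ 2 ≤ B)
    (x : ι → ℝ) (i : ι) : Integrable (fun s => a s i * Real.exp (∑ j, a s j * x j)) ν :=
  (integrable_exp_features ha hB x).bdd_mul (by fun_prop : Measurable _).aestronglyMeasurable
    (c := √B) (hB.mono fun _ hs => abs_le_sqrt_of_sum_sq_le hs i)

lemma integrable_features_mul_exp (ha : Measurable a) (hB : ∀ᵐ s ∂ν, ∑ i, a s i ^ 2 ≤ B)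
    (x w : ι → ℝ) :
    Integrable (fun s => (∑ i, a s i * w i) * Real.exp (∑ j, a s j * x j)) ν := by
  simp only [sum_mul_mul_eq_sum]
  exact integrable_finsetSum _ fun i _ => (integrable_mul_exp_features ha hB x i).const_mul _

variable [NeZero ν]

lemma integral_features_mul_exp (ha : Measurable a) (hB : ∀ᵐ s ∂ν, ∑ i, a s i ^ 2 ≤ B)
    (x w : ι → ℝ) :
    ∫ s, (∑ i, a s i * w i) * Real.exp (∑ j, a s j * x j) ∂ν
      = (∑ i, gibbsMean ν a x i * w i) * ∫ s, Real.exp (∑ j, a s j * x j) ∂ν := by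
  have hZ : 0 < ∫ s, Real.exp (∑ j, a s j * x j) ∂ν :=
    integral_exp_pos (integrable_exp_features ha hB x)
  simp only [sum_mul_mul_eq_sum]
  rw [integral_finsetSum _ fun i _ => (integrable_mul_exp_features ha hB x i).const_mul _]
  refine Finset.sum_congr rfl fun i _ => ?_
  rw [integral_const_mul, gibbsMean]
  field_simp

lemma isSubgradient_log_partition (ha : Measurable a) (hB : ∀ᵐ s ∂ν, ∑ i, a s i ^ 2 ≤ B) :
    IsSubgradient (fun x => Real.log (∫ s, Real.exp (∑ j, a s j * x j) ∂ν)) (gibbsMean ν a) := by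
  intro y z
  have hZz : 0 < ∫ s, Real.exp (∑ j, a s j * z j) ∂ν :=
    integral_exp_pos (integrable_exp_features ha hB z)
  have hZy : 0 < ∫ s, Real.exp (∑ j, a s j * y j) ∂ν :=
    integral_exp_pos (integrable_exp_features ha hB y)
  set w : ι → ℝ := fun i => y i - z i with hw
  set u := ∑ i, gibbsMean ν a z i * w i with hu
  have hpt : ∀ s, Real.exp u * ((1 - u) * Real.exp (∑ j, a s j * z j)
      + (∑ i, a s i * w i) * Real.exp (∑ j, a s j * z j)) ≤ Real.exp (∑ j, a s j * y j) := by
    intro s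
    have hsum : ∑ j, a s j * y j = ∑ j, a s j * z j + u + (∑ i, a s i * w i - u) := by
      have : ∑ i, a s i * w i = ∑ j, a s j * y j - ∑ j, a s j * z j := by
        simp only [hw, mul_sub, Finset.sum_sub_distrib]
      rw [this]; ring
    rw [hsum, Real.exp_add, Real.exp_add]
    have h1 := Real.add_one_le_exp (∑ i, a s i * w i - u)
    have h2 : 0 < Real.exp (∑ j, a s j * z j) * Real.exp u := by positivity
    nlinarith [mul_le_mul_of_nonneg_left h1 h2.le]
  have hi1 := integrable_exp_features ha hB z
  have hi2 := integrable_features_mul_exp ha hB z w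
  have hle := integral_mono (((hi1.const_mul (1 - u)).add hi2).const_mul (Real.exp u))
    (integrable_exp_features ha hB y) hpt
  rw [integral_const_mul, integral_add' (hi1.const_mul (1 - u)) hi2, integral_const_mul,
    integral_features_mul_exp ha hB, ← hu, ← add_mul, sub_add_cancel, one_mul] at hle
  have hlog := Real.log_le_log (by positivity) hle
  rw [Real.log_mul (Real.exp_pos _).ne' hZz.ne', Real.log_exp] at hlog
  have hneg : ∑ i, gibbsMean ν a z i * (z i - y i) = -u := by
    rw [hu, ← Finset.sum_neg_distrib]
    exact Finset.sum_congr rfl fun i _ => by rw [hw]; ring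
  rw [hneg]
  linarith

lemma sum_sq_gibbsMean_le (ha : Measurable a) (hB : ∀ᵐ s ∂ν, ∑ i, a s i ^ 2 ≤ B)
    (x : ι → ℝ) : ∑ i, gibbsMean ν a x i ^ 2 ≤ B := by
  have hi := integrable_exp_features ha hB x
  have hZ : 0 < ∫ s, Real.exp (∑ j, a s j * x j) ∂ν := integral_exp_pos hi
  set v := gibbsMean ν a x with hv
  set q := ∑ i, v i ^ 2 with hq
  have hle : ∫ s, (∑ i, a s i * v i) * Real.exp (∑ j, a s j * x j) ∂ν
      ≤ ∫ s, (B + q) / 2 * Real.exp (∑ j, a s j * x j) ∂ν := by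
    refine integral_mono_ae (integrable_features_mul_exp ha hB x v) (hi.const_mul _)
      (hB.mono fun s hs => mul_le_mul_of_nonneg_right ?_ (Real.exp_pos _).le)
    calc ∑ i, a s i * v i ≤ ∑ i, (a s i ^ 2 + v i ^ 2) / 2 :=
          Finset.sum_le_sum fun i _ => by nlinarith [sq_nonneg (a s i - v i)]
      _ = (∑ i, a s i ^ 2 + q) / 2 := by rw [← Finset.sum_div, Finset.sum_add_distrib]
      _ ≤ (B + q) / 2 := by linarith
  rw [integral_features_mul_exp ha hB, integral_const_mul] at hle
  have h1 : ∑ i, gibbsMean ν a x i * v i = q :=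
    Finset.sum_congr rfl fun i _ => (sq (v i)).symm
  rw [h1] at hle
  linarith [le_of_mul_le_mul_right hle hZ]

end LogPartition

end Gaussian


section TAP

variable {N P : ℕ} {c : ℕ → ℝ}

lemma hamiltonian_eq_sum_flatten (g : (k : ℕ) → (Fin k → Fin N) → ℝ) (σ : Fin N → ℝ) :
    hamiltonian N P c g σ = ∑ i : GIdx N P,
      (c i.1 * (N : ℝ) ^ (-((((i.1 : ℕ) : ℝ) - 1) / 2)) * ∏ l, σ (i.2 l)) * flatten N P g i := by
  rw [hamiltonian, Fintype.sum_sigma, ← Finset.sum_coe_sort]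
  refine Finset.sum_congr rfl fun k _ => ?_
  rw [Finset.mul_sum]
  exact Finset.sum_congr rfl fun j _ => by simp only [flatten]; ring

/-- Coefficients of the couplings in the exponent of the replicated partition function. -/
def tapFeature (N P : ℕ) (c : ℕ → ℝ) {k : ℕ} (β : ℝ) (m : Fin N → ℝ) (σs : Fin k → Fin N → ℝ)
    (i : GIdx N P) : ℝ :=
  β * ∑ r, c i.1 * (N : ℝ) ^ (-((((i.1 : ℕ) : ℝ) - 1) / 2)) *
    (∏ l, σs r (i.2 l) - ∏ l, m (i.2 l))

lemma measurable_tapFeature {k : ℕ} (β : ℝ) (m : Fin N → ℝ) :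
    Measurable (tapFeature N P c (k := k) β m) := by
  unfold tapFeature
  fun_prop

lemma sum_hamiltonian_sub_eq {k : ℕ} (β : ℝ) (m : Fin N → ℝ)
    (g : (k : ℕ) → (Fin k → Fin N) → ℝ) (σs : Fin k → Fin N → ℝ) :
    β * ∑ r, (hamiltonian N P c g (σs r) - hamiltonian N P c g m)
      = ∑ i, tapFeature N P c β m σs i * flatten N P g i := by
  simp only [hamiltonian_eq_sum_flatten, tapFeature, ← Finset.sum_sub_distrib, Finset.mul_sum,
    Finset.sum_mul]
  rw [Finset.sum_comm]
  exact Finset.sum_congr rfl fun i _ => Finset.sum_congr rfl fun r _ => by ring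

lemma TAPk_eq_log_partition (k : ℕ) (β δ ε : ℝ) (g : (k : ℕ) → (Fin k → Fin N) → ℝ)
    (m : Fin N → ℝ) :
    TAPk N P c k β δ ε g m = (k * N : ℝ)⁻¹ * Real.log (∫ σs,
      Real.exp (∑ i, tapFeature N P c β m σs i * flatten N P g i)
        ∂((Measure.pi fun _ : Fin k => sphereUniform N).restrict (bandK N k m δ ε))) := by
  simp only [TAPk, sum_hamiltonian_sub_eq]
  rw [div_eq_inv_mul]

lemma sum_prod_sq (n : ℕ) (σ : Fin N → ℝ) :
    ∑ j : Fin n → Fin N, (∏ l, σ (j l)) ^ 2 = (∑ i, σ i ^ 2) ^ n := by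
  rw [Finset.sum_pow', Fintype.piFinset_univ]
  simp only [Finset.prod_pow]

lemma sum_sq_tapFeature_le (hN : 1 ≤ N) {k : ℕ} (β : ℝ) {m : Fin N → ℝ}
    (hm : ∑ i, m i ^ 2 ≤ (N : ℝ)) {σs : Fin k → Fin N → ℝ}
    (hσ : ∀ r, ∑ i, σs r i ^ 2 = (N : ℝ)) :
    ∑ i, tapFeature N P c β m σs i ^ 2
      ≤ 4 * β ^ 2 * k ^ 2 * (∑ n ∈ Finset.Icc 2 P, c n ^ 2) * N := by
  have hN0 : (0 : ℝ) < N := by exact_mod_cast hN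
  have hk : ∀ n : ℕ, ∑ j : Fin n → Fin N, (β * ∑ r : Fin k, c n *
      (N : ℝ) ^ (-(((n : ℝ) - 1) / 2)) * (∏ l, σs r (j l) - ∏ l, m (j l))) ^ 2
      ≤ 4 * β ^ 2 * k ^ 2 * N * c n ^ 2 := by
    intro n
    set b := (N : ℝ) ^ (-(((n : ℝ) - 1) / 2)) with hb
    have hbN : b ^ 2 * (N : ℝ) ^ n = N := by
      rw [hb, ← Real.rpow_natCast (n := 2), ← Real.rpow_mul hN0.le, ← Real.rpow_natCast (n := n),
        ← Real.rpow_add hN0]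
      have : -(((n : ℝ) - 1) / 2) * ((2 : ℕ) : ℝ) + n = 1 := by push_cast; ring
      rw [this, Real.rpow_one]
    have hpt : ∀ j : Fin n → Fin N,
        (β * ∑ r : Fin k, c n * b * (∏ l, σs r (j l) - ∏ l, m (j l))) ^ 2
        ≤ β ^ 2 * (c n * b) ^ 2 * (k * ∑ r : Fin k,
          2 * ((∏ l, σs r (j l)) ^ 2 + (∏ l, m (j l)) ^ 2)) := by
      intro j
      rw [← Finset.mul_sum, ← mul_assoc, mul_pow, mul_pow]
      refine mul_le_mul_of_nonneg_left ?_ (by positivity)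
      refine (sq_sum_le_card_mul_sum_sq).trans ?_
      rw [Finset.card_univ, Fintype.card_fin]
      gcongr with r
      nlinarith [sq_nonneg (∏ l, σs r (j l) + ∏ l, m (j l))]
    have hm0 : 0 ≤ ∑ i, m i ^ 2 := Finset.sum_nonneg fun _ _ => sq_nonneg _
    calc _ ≤ ∑ j : Fin n → Fin N, β ^ 2 * (c n * b) ^ 2 * (k * ∑ r : Fin k,
          2 * ((∏ l, σs r (j l)) ^ 2 + (∏ l, m (j l)) ^ 2)) := Finset.sum_le_sum fun j _ => hpt j
      _ = β ^ 2 * (c n * b) ^ 2 * (k * ∑ r : Fin k,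
          2 * ((∑ i, σs r i ^ 2) ^ n + (∑ i, m i ^ 2) ^ n)) := by
        rw [← Finset.mul_sum, ← Finset.mul_sum, Finset.sum_comm]
        simp only [← Finset.mul_sum, Finset.sum_add_distrib, sum_prod_sq]
      _ ≤ β ^ 2 * (c n * b) ^ 2 * (k * ∑ _r : Fin k, 2 * ((N : ℝ) ^ n + (N : ℝ) ^ n)) := by
        gcongr with r
        exact (hσ r).le
      _ = 4 * β ^ 2 * k ^ 2 * (b ^ 2 * (N : ℝ) ^ n) * c n ^ 2 := by
        rw [Finset.sum_const, Finset.card_univ, Fintype.card_fin, nsmul_eq_mul]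
        ring
      _ = _ := by rw [hbN]
  calc _ = ∑ n : {n : ℕ // n ∈ Finset.Icc 2 P}, ∑ j : Fin n → Fin N,
        (β * ∑ r : Fin k, c n * (N : ℝ) ^ (-((((n : ℕ) : ℝ) - 1) / 2)) *
          (∏ l, σs r (j l) - ∏ l, m (j l))) ^ 2 := by
        rw [Fintype.sum_sigma]
        rfl
    _ ≤ ∑ n : {n : ℕ // n ∈ Finset.Icc 2 P}, 4 * β ^ 2 * k ^ 2 * N * c n ^ 2 :=
        Finset.sum_le_sum fun n _ => hk n
    _ = ∑ n ∈ Finset.Icc 2 P, 4 * β ^ 2 * k ^ 2 * N * c n ^ 2 :=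
        Finset.sum_coe_sort (Finset.Icc 2 P) fun n => 4 * β ^ 2 * k ^ 2 * (N : ℝ) * c n ^ 2
    _ = _ := by rw [← Finset.mul_sum]; ring

lemma isProbabilityMeasure_sphereUniform (N : ℕ) : IsProbabilityMeasure (sphereUniform N) :=
  Measure.isProbabilityMeasure_map (by fun_prop : Measurable _).aemeasurable

lemma measurableSet_bandK (N k : ℕ) (m : Fin N → ℝ) (δ ε : ℝ) :
    MeasurableSet (bandK N k m δ ε) := by
  have h : bandK N k m δ ε = (⋂ i, {σs | ∑ j, (σs i j) ^ 2 = (N : ℝ)} ∩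
      {σs | |∑ j, (σs i j - m j) * m j| < N * δ}) ∩
      ⋂ i, ⋂ j, ⋂ _ : i ≠ j, {σs : Fin k → Fin N → ℝ |
        |∑ l, σs i l * σs j l - dotp m m| < N * ε} := by
    ext σs
    simp [bandK, band, sphereSet, dotp]
  rw [h]
  refine (MeasurableSet.iInter fun i => ?_).inter
    (MeasurableSet.iInter fun i => MeasurableSet.iInter fun j => MeasurableSet.iInter fun _ => ?_)
  · exact (measurableSet_eq_fun (by fun_prop) (by fun_prop)).inter
      (measurableSet_lt (by fun_prop) (by fun_prop))
  · exact measurableSet_lt (by fun_prop) (by fun_prop)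

/-- The TAP free energy is a function of the Gaussian vector of couplings, with subgradients of
squared norm `O(1/N)`. -/
lemma exists_TAPk_eq_isSubgradient (hN : 1 ≤ N) {k : ℕ} (hk : 1 ≤ k) (β δ ε : ℝ) {m : Fin N → ℝ}
    (hm : ∑ i, m i ^ 2 ≤ (N : ℝ))
    (hpos : 0 < (Measure.pi fun _ : Fin k => sphereUniform N) (bandK N k m δ ε)) :
    ∃ (F : (GIdx N P → ℝ) → ℝ) (v : (GIdx N P → ℝ) → GIdx N P → ℝ),
      (∀ g, TAPk N P c k β δ ε g m = F (flatten N P g)) ∧ IsSubgradient F v ∧ Measurable v ∧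
      ∀ x, ∑ i, v x i ^ 2 ≤ 4 * β ^ 2 * (∑ n ∈ Finset.Icc 2 P, c n ^ 2) / N := by
  have := isProbabilityMeasure_sphereUniform N
  set ν := (Measure.pi fun _ : Fin k => sphereUniform N).restrict (bandK N k m δ ε) with hν
  have : NeZero ν := ⟨by rw [hν, Ne, Measure.restrict_eq_zero]; exact hpos.ne'⟩
  have hN0 : (0 : ℝ) < N := by exact_mod_cast hN
  have hk0 : (0 : ℝ) < k := by exact_mod_cast hk
  have ha := measurable_tapFeature (N := N) (P := P) (c := c) (k := k) β m
  have hB : ∀ᵐ σs ∂ν, ∑ i, tapFeature N P c β m σs i ^ 2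
      ≤ 4 * β ^ 2 * k ^ 2 * (∑ n ∈ Finset.Icc 2 P, c n ^ 2) * N :=
    ae_restrict_of_forall_mem (measurableSet_bandK N k m δ ε) fun σs hσ =>
      sum_sq_tapFeature_le hN β hm fun r => (hσ.1 r).1
  refine ⟨_, _, fun g => TAPk_eq_log_partition k β δ ε g m,
    (isSubgradient_log_partition ha hB).const_mul (by positivity), ?_, fun x => ?_⟩
  · have := measurable_gibbsMean (ν := ν) ha
    fun_prop
  · simp only [mul_pow, ← Finset.mul_sum]
    refine (mul_le_mul_of_nonneg_left (sum_sq_gibbsMean_le ha hB x) (by positivity)).trans_eq ?_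
    field_simp

/-- Finitely many strict bounds together with an exponential bound with prefactor `2` combine into
a clean exponential bound. -/
lemma exists_pos_forall_lt_exp {b : ℝ} (hb : 0 < b) (p : ℕ → ℝ) (hp : ∀ N, 0 < p N) :
    ∃ cc > (0 : ℝ), ∀ N : ℕ, 1 ≤ N →
      2 * Real.exp (-b * N) < Real.exp (-cc * N) ∨ 1 - p N < Real.exp (-cc * N) := by
  obtain ⟨n₀, hn₀⟩ := exists_nat_gt (2 * Real.log 2 / b)
  have hsmall : ∀ᶠ x in nhdsWithin (0 : ℝ) (Set.Ioi 0), ∀ N ∈ Finset.range n₀,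
      1 - p N < Real.exp (-x * N) := by
    rw [Filter.eventually_all_finset]
    intro N _
    have hcont : Continuous fun x : ℝ => Real.exp (-x * N) := by fun_prop
    have h0 : 1 - p N < Real.exp (-(0 : ℝ) * N) := by simpa using hp N
    exact ((hcont.tendsto 0).eventually (lt_mem_nhds h0)).filter_mono nhdsWithin_le_nhds
  have hle : ∀ᶠ x in nhdsWithin (0 : ℝ) (Set.Ioi 0), x < b / 2 :=
    (gt_mem_nhds (half_pos hb)).filter_mono nhdsWithin_le_nhds
  obtain ⟨x, ⟨hx1, hx2⟩, hx0⟩ := ((hsmall.and hle).and self_mem_nhdsWithin).exists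
  refine ⟨x, hx0, fun N hN => ?_⟩
  by_cases hNn : N < n₀
  · exact Or.inr (hx1 N (Finset.mem_range.2 hNn))
  · left
    have hN0 : (0 : ℝ) < N := by exact_mod_cast hN
    have h1 : 2 * Real.log 2 / b < N :=
      hn₀.trans_le (by exact_mod_cast not_lt.1 hNn)
    rw [div_lt_iff₀ hb] at h1
    calc 2 * Real.exp (-b * N) = Real.exp (Real.log 2 + -b * N) := by
          rw [Real.exp_add, Real.exp_log two_pos]
      _ < Real.exp (-x * N) := by
          rw [Real.exp_lt_exp]
          nlinarith

end TAP


/-- uniform exponential concentration of the replicated TAP free energy. -/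
theorem statement_19 {Ω : Type*} [MeasureSpace Ω] [IsProbabilityMeasure (ℙ : Measure Ω)]
    (P : ℕ) (hP : 2 ≤ P) (c : ℕ → ℝ) (hc : ∃ k ∈ Finset.Icc 2 P, c k ≠ 0)
    (G : (N : ℕ) → Ω → (k : ℕ) → (Fin k → Fin N) → ℝ)
    (hG : ∀ N, 1 ≤ N → StdGaussianCouplings N P (G N))
    (β : ℝ) (hβ : 0 < β) (δ ε t : ℝ) (hδ : 0 < δ) (hε : 0 < ε) (ht : 0 < t)
    (k : ℕ) (hk : 1 ≤ k) :
    ∃ cc > (0 : ℝ), ∀ N : ℕ, 1 ≤ N → ∀ m : Fin N → ℝ, ∑ i, (m i) ^ 2 ≤ (N : ℝ) →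
      0 < (Measure.pi fun _ : Fin k => sphereUniform N) (bandK N k m δ ε) →
      1 - Real.exp (-cc * N) <
        (ℙ {ω | |TAPk N P c k β δ ε (G N ω) m
          - ∫ ω', TAPk N P c k β δ ε (G N ω') m ∂ℙ| < t}).toReal := by
  set D := ∑ n ∈ Finset.Icc 2 P, c n ^ 2 with hD
  have hD0 : 0 < D := by
    obtain ⟨n, hn, hcn⟩ := hc
    exact (by positivity : 0 < c n ^ 2).trans_le
      (Finset.single_le_sum (f := fun n => c n ^ 2) (fun _ _ => sq_nonneg _) hn)
  have hb : 0 < t ^ 2 / (2 * Real.pi ^ 2 * β ^ 2 * D) := by positivity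
  choose p hp hpK using fun N : ℕ => exists_pos_forall_lipschitzWith_le_measure (GIdx N P)
    (Real.toNNReal (√(4 * β ^ 2 * D / N) * Fintype.card (GIdx N P))) ht
  have hp1 : ∀ N, p N ≤ 1 := fun N =>
    (hpK N (fun _ => 0) (LipschitzWith.const' 0)).trans prob_le_one
  have hptop : ∀ N, p N ≠ ∞ := fun N => ((hp1 N).trans_lt ENNReal.one_lt_top).ne
  obtain ⟨cc, hcc, hcases⟩ := exists_pos_forall_lt_exp hb (fun N => (p N).toReal)
    fun N => ENNReal.toReal_pos (hp N).ne' (hptop N)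
  refine ⟨cc, hcc, fun N hN m hm hpos => ?_⟩
  have hN0 : (0 : ℝ) < N := by exact_mod_cast hN
  obtain ⟨F, v, hF, hsub, hvm, hv⟩ :=
    exists_TAPk_eq_isSubgradient (P := P) (c := c) hN hk β δ ε hm hpos
  have hFc := hsub.continuous hv
  have hlaw : Measure.map (fun ω => flatten N P (G N ω)) ℙ = gaussPi (GIdx N P) := hG N hN
  have haem : AEMeasurable (fun ω => flatten N P (G N ω)) (ℙ : Measure Ω) :=
    aemeasurable_of_map_neZero (by rw [hlaw]; infer_instance)
  set M := ∫ x, F x ∂(gaussPi (GIdx N P)) with hM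
  have hmean : ∫ ω', TAPk N P c k β δ ε (G N ω') m ∂ℙ = M := by
    rw [hM, ← hlaw, integral_map haem hFc.aestronglyMeasurable]
    simp only [hF]
  have hmeas : MeasurableSet {x | |F x - M| < t} :=
    measurableSet_lt (by fun_prop) measurable_const
  have hset : (ℙ : Measure Ω) {ω | |TAPk N P c k β δ ε (G N ω) m
      - ∫ ω', TAPk N P c k β δ ε (G N ω') m ∂ℙ| < t}
      = gaussPi (GIdx N P) {x | |F x - M| < t} := by
    rw [hmean, ← hlaw, Measure.map_apply_of_aemeasurable haem hmeas]
    simp only [hF]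
    rfl
  rw [hset]
  rcases hcases N hN with h | h
  · have hconc := hsub.measure_abs_sub_integral_ge_le hvm hv (by positivity) ht.le
    rw [← hM] at hconc
    have hcompl : {x | t ≤ |F x - M|} = {x | |F x - M| < t}ᶜ := by
      ext x
      simp
    have hexp : -(2 * t ^ 2 / (Real.pi ^ 2 * (4 * β ^ 2 * D / N)))
        = -(t ^ 2 / (2 * Real.pi ^ 2 * β ^ 2 * D)) * N := by
      field_simp
      norm_num
    rw [hcompl, hexp] at hconc
    have hreal := ENNReal.toReal_mono ENNReal.ofReal_ne_top hconc
    rw [ENNReal.toReal_ofReal (by positivity)] at hreal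
    have hadd := probReal_compl_eq_one_sub (μ := gaussPi (GIdx N P)) hmeas
    simp only [measureReal_def] at hadd
    linarith
  · have hle := ENNReal.toReal_mono (measure_ne_top _ _) (hpK N F (hsub.lipschitzWith hv))
    linarith
end
end
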